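/- arXiv:1809.10354 — 8 statements merged into one kernel-verified Lean document; each statement's English description precedes it below -/
import Mathlib

section
/- Let V be a real Hilbert space, B : V × V → ℝ a bounded symmetric bilinear form with c‖v‖² ≤ B(v,v) for all v ∈ V for some c > 0, F : V → ℝ a bounded linear functional, and V_h ⊆ V a closed subspace. Let u ∈ V satisfy B(u,v) = F(v) for all v ∈ V and let u_h ∈ V_h satisfy B(u_h, v_h) = F(v_h) for all v_h ∈ V_h. Then for every v_h ∈ V_h one has √c · ‖u − u_h‖ ≤ √(B(u − v_h, u − v_h)). -/
/-!
The error `u - uh` is `B`-orthogonal to `Vh`, so `u - vh = (u - uh) + (uh - vh)` is an orthogonal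
decomposition for the energy inner product `B`. By Pythagoras the energy of `u - vh` is at least
that of `u - uh`, which dominates `c * ‖u - uh‖ ^ 2` by coercivity.
-/

/-- **Céa's lemma.**
Let `V` be a real Hilbert space, `B` a bounded symmetric bilinear form with
`c‖v‖² ≤ B v v` for all `v` for some `c > 0`, `F` a bounded linear functional,
`V_h ⊆ V` a closed subspace.  If `u` solves the variational problem over `V` and
`u_h ∈ V_h` solves the Galerkin problem over `V_h`, then for every `v_h ∈ V_h`,
`√c · ‖u − u_h‖ ≤ √(B (u − v_h) (u − v_h))`. -/
theorem cea_lemma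
    {V : Type*} [NormedAddCommGroup V] [InnerProductSpace ℝ V] [CompleteSpace V]
    (B : V →ₗ[ℝ] V →ₗ[ℝ] ℝ)
    (M : ℝ) (hBbound : ∀ u v : V, |B u v| ≤ M * ‖u‖ * ‖v‖)
    (hBsymm : ∀ u v : V, B u v = B v u)
    (c : ℝ) (hc : 0 < c)
    (hcoercive : ∀ v : V, c * ‖v‖ ^ 2 ≤ B v v)
    (F : V →L[ℝ] ℝ)
    (Vh : Submodule ℝ V) (hVh : IsClosed (Vh : Set V))
    (u : V) (hu : ∀ v : V, B u v = F v)
    (uh : V) (huh_mem : uh ∈ Vh) (huh : ∀ vh ∈ Vh, B uh vh = F vh) :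
    ∀ vh ∈ Vh, Real.sqrt c * ‖u - uh‖ ≤ Real.sqrt (B (u - vh) (u - vh)) := by
  intro vh hvh
  have hw : uh - vh ∈ Vh := Vh.sub_mem huh_mem hvh
  -- Galerkin orthogonality: the error is `B`-orthogonal to the subspace.
  have horth : B (u - uh) (uh - vh) = 0 := by
    rw [LinearMap.map_sub₂, hu, huh _ hw, sub_self]
  have hpyth : B (u - vh) (u - vh) =
      B (u - uh) (u - uh) + B (uh - vh) (uh - vh) := by
    have hsplit : u - vh = (u - uh) + (uh - vh) := by abel
    rw [hsplit]
    simp only [map_add, LinearMap.add_apply, hBsymm (uh - vh) (u - uh), horth]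
    ring
  have hnonneg : 0 ≤ B (uh - vh) (uh - vh) :=
    le_trans (by positivity) (hcoercive (uh - vh))
  apply Real.le_sqrt_of_sq_le
  rw [mul_pow, Real.sq_sqrt hc.le, hpyth]
  linarith [hcoercive (u - uh)]
end

section
/- Let V be a real Hilbert space, B : V × V → ℝ a bounded symmetric bilinear form with c‖v‖² ≤ B(v,v) for all v for some c > 0, and ⟨·,·⟩ : V × V → ℝ a bounded symmetric positive semidefinite bilinear form. Let V_h ⊆ V be a closed subspace, let u ∈ V and u_h ∈ V_h satisfy B(u,v) = F(v) for all v ∈ V and B(u_h,v_h) = F(v_h) for all v_h ∈ V_h, for a bounded linear functional F. Let z ∈ V satisfy the dual problem B(v, z) = ⟨u − u_h, v⟩ for all v ∈ V. Then for every z_h ∈ V_h one has ⟨u − u_h, u − u_h⟩ ≤ √(B(u − u_h, u − u_h)) · √(B(z − z_h, z − z_h)). -/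
/-- **Aubin–Nitsche duality estimate.**
Let `V` be a real Hilbert space, `B` a bounded symmetric coercive bilinear form
(constant `c > 0`), `I` a bounded symmetric positive semidefinite bilinear form
(playing the role of the `L²` inner product), `V_h` a closed subspace,
`u` the solution of the variational problem, `u_h` the Galerkin solution, and
`z` the solution of the dual problem `B v z = I (u − u_h) v` for all `v`.
Then for every `z_h ∈ V_h`,
`I (u − u_h) (u − u_h) ≤ √(B (u − u_h) (u − u_h)) · √(B (z − z_h) (z − z_h))`. -/
theorem aubin_nitsche_duality
    {V : Type*} [NormedAddCommGroup V] [InnerProductSpace ℝ V] [CompleteSpace V]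
    (B : V →ₗ[ℝ] V →ₗ[ℝ] ℝ)
    (M : ℝ) (hBbound : ∀ u v : V, |B u v| ≤ M * ‖u‖ * ‖v‖)
    (hBsymm : ∀ u v : V, B u v = B v u)
    (c : ℝ) (hc : 0 < c)
    (hcoercive : ∀ v : V, c * ‖v‖ ^ 2 ≤ B v v)
    (I : V →ₗ[ℝ] V →ₗ[ℝ] ℝ)
    (MI : ℝ) (hIbound : ∀ u v : V, |I u v| ≤ MI * ‖u‖ * ‖v‖)
    (hIsymm : ∀ u v : V, I u v = I v u)
    (hIpsd : ∀ v : V, 0 ≤ I v v)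
    (F : V →L[ℝ] ℝ)
    (Vh : Submodule ℝ V) (hVh : IsClosed (Vh : Set V))
    (u : V) (hu : ∀ v : V, B u v = F v)
    (uh : V) (huh_mem : uh ∈ Vh) (huh : ∀ vh ∈ Vh, B uh vh = F vh)
    (z : V) (hz : ∀ v : V, B v z = I (u - uh) v) :
    ∀ zh ∈ Vh,
      I (u - uh) (u - uh) ≤
        Real.sqrt (B (u - uh) (u - uh)) * Real.sqrt (B (z - zh) (z - zh)) := by
  intro zh hzh
  have hnonneg : ∀ v : V, 0 ≤ B v v := fun v => le_trans (by positivity) (hcoercive v)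
  -- Galerkin orthogonality allows `zh` to be subtracted from the dual solution.
  have horth : B (u - uh) zh = 0 := by
    rw [map_sub, LinearMap.sub_apply, hu, huh zh hzh, sub_self]
  have hkey : I (u - uh) (u - uh) = B (u - uh) (z - zh) := by
    rw [map_sub (B (u - uh)), horth, sub_zero, hz]
  rw [hkey, ← Real.sqrt_mul (hnonneg _)]
  exact Real.le_sqrt_of_sq_le
    (LinearMap.BilinForm.apply_sq_le_of_symm B hnonneg ⟨hBsymm⟩ _ _)
end

section
/- Let V be a real Hilbert space, B : V × V → ℝ a bounded symmetric bilinear form with c‖v‖² ≤ B(v,v) for all v for some c > 0, and V_h ⊆ V a closed subspace. Let B_h : V_h × V_h → ℝ be a bounded bilinear form with c_h‖v_h‖² ≤ B_h(v_h,v_h) for all v_h ∈ V_h for some c_h > 0, and let F : V → ℝ and F_h : V_h → ℝ be bounded linear functionals. Let u_h ∈ V_h satisfy B(u_h, v_h) = F(v_h) for all v_h ∈ V_h, and let ū_h ∈ V_h satisfy B_h(ū_h, v_h) = F_h(v_h) for all v_h ∈ V_h. Then √(B(u_h − ū_h, u_h − ū_h)) ≤ sup over nonzero w_h ∈ V_h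 of ( F(w_h) − F_h(w_h) + B_h(ū_h, w_h) − B(ū_h, w_h) ) / √(B(w_h, w_h)). -/
/-!
Subtracting the two Galerkin equations, the numerator of every quotient equals `B e w` with
`e = u_h − ū_h ∈ V_h`. Boundedness and coercivity of `B` bound these quotients by `|M| ‖e‖ / √c`,
so the supremum is a genuine one, and testing with `w = e` gives the quotient `√(B e e)`.
-/

/-- **Strang-type comparison of conforming and non-conforming Galerkin solutions.**
Let `V` be a real Hilbert space, `B` a bounded symmetric coercive bilinear form
(constant `c > 0`), `V_h ⊆ V` a closed subspace, `B_h` a bounded bilinear form on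
`V_h` with discrete coercivity constant `c_h > 0`, and `F`, `F_h` bounded linear
functionals on `V` and `V_h` respectively.  If `u_h ∈ V_h` is the conforming
Galerkin solution (`B u_h v_h = F v_h` for all `v_h ∈ V_h`) and `ū_h ∈ V_h` the
non-conforming one (`B_h ū_h v_h = F_h v_h` for all `v_h ∈ V_h`), then
`√(B (u_h − ū_h) (u_h − ū_h))` is bounded by the supremum, over nonzero
`w_h ∈ V_h`, of
`(F w_h − F_h w_h + B_h ū_h w_h − B ū_h w_h) / √(B w_h w_h)`. -/
theorem strang_comparison_conforming_nonconforming
    {V : Type*} [NormedAddCommGroup V] [InnerProductSpace ℝ V] [CompleteSpace V]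
    (B : V →ₗ[ℝ] V →ₗ[ℝ] ℝ)
    (M : ℝ) (hBbound : ∀ u v : V, |B u v| ≤ M * ‖u‖ * ‖v‖)
    (hBsymm : ∀ u v : V, B u v = B v u)
    (c : ℝ) (hc : 0 < c)
    (hcoercive : ∀ v : V, c * ‖v‖ ^ 2 ≤ B v v)
    (Vh : Submodule ℝ V) (hVh : IsClosed (Vh : Set V))
    (Bh : Vh →ₗ[ℝ] Vh →ₗ[ℝ] ℝ)
    (Mh : ℝ) (hBhbound : ∀ uh vh : Vh, |Bh uh vh| ≤ Mh * ‖uh‖ * ‖vh‖)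
    (ch : ℝ) (hch : 0 < ch)
    (hBhcoercive : ∀ vh : Vh, ch * ‖vh‖ ^ 2 ≤ Bh vh vh)
    (F : V →L[ℝ] ℝ) (Fh : Vh →L[ℝ] ℝ)
    (uh : Vh) (huh : ∀ vh : Vh, B (uh : V) (vh : V) = F (vh : V))
    (uuh : Vh) (huuh : ∀ vh : Vh, Bh uuh vh = Fh vh) :
    Real.sqrt (B ((uh : V) - (uuh : V)) ((uh : V) - (uuh : V))) ≤
      sSup {t : ℝ | ∃ wh : Vh, wh ≠ 0 ∧
        t = (F (wh : V) - Fh wh + Bh uuh wh - B (uuh : V) (wh : V)) /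
              Real.sqrt (B (wh : V) (wh : V))} := by
  have hnum : ∀ wh : Vh, F (wh : V) - Fh wh + Bh uuh wh - B (uuh : V) (wh : V)
      = B ((uh : V) - (uuh : V)) (wh : V) := by
    intro wh
    rw [huuh, ← huh, map_sub, LinearMap.sub_apply]
    ring
  simp only [hnum]
  by_cases he : uh - uuh = 0
  · -- For `e = 0` every quotient is `0`; the index set may be empty, where `sSup ∅ = 0`.
    have he' : (uh : V) - (uuh : V) = 0 := by simpa using congrArg (Subtype.val) he
    rw [he']
    simp only [map_zero, LinearMap.zero_apply, Real.sqrt_zero, zero_div]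
    refine Real.sSup_nonneg ?_
    rintro t ⟨_, _, rfl⟩
    exact le_rfl
  · have hbdd : BddAbove {t : ℝ | ∃ wh : Vh, wh ≠ 0 ∧
        t = B ((uh : V) - (uuh : V)) (wh : V) / Real.sqrt (B (wh : V) (wh : V))} := by
      refine ⟨|M| * ‖(uh : V) - (uuh : V)‖ / Real.sqrt c, ?_⟩
      rintro t ⟨wh, hwh, rfl⟩
      have hw : 0 < ‖(wh : V)‖ := norm_pos_iff.mpr (by simpa using hwh)
      have hsc : 0 < Real.sqrt c := Real.sqrt_pos.mpr hc
      have hlow : Real.sqrt c * ‖(wh : V)‖ ≤ Real.sqrt (B (wh : V) (wh : V)) := by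
        refine Real.le_sqrt_of_sq_le ?_
        rw [mul_pow, Real.sq_sqrt hc.le]
        exact hcoercive _
      have hup : B ((uh : V) - (uuh : V)) (wh : V)
          ≤ |M| * ‖(uh : V) - (uuh : V)‖ * ‖(wh : V)‖ := by
        refine (le_abs_self _).trans ((hBbound _ _).trans ?_)
        gcongr
        exact le_abs_self M
      calc B ((uh : V) - (uuh : V)) (wh : V) / Real.sqrt (B (wh : V) (wh : V))
          ≤ |M| * ‖(uh : V) - (uuh : V)‖ * ‖(wh : V)‖ / Real.sqrt (B (wh : V) (wh : V)) := by
            gcongr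
        _ ≤ |M| * ‖(uh : V) - (uuh : V)‖ * ‖(wh : V)‖ / (Real.sqrt c * ‖(wh : V)‖) := by
            gcongr
        _ = |M| * ‖(uh : V) - (uuh : V)‖ / Real.sqrt c := by
            field_simp
    refine le_csSup hbdd ⟨uh - uuh, he, ?_⟩
    rw [Submodule.coe_sub, Real.div_sqrt]
end

section
/- Let Ω̂, Ω̆ ⊆ ℝⁿ be bounded open sets and Φ : Ω̂ → Ω̆ a bijective continuously differentiable map whose inverse is continuously differentiable, such that Φ and Φ⁻¹ are Lipschitz. Let f : Ω̆ → ℝ and g : Ω̆ → ℝⁿ be continuous and bounded. Then for every continuously differentiable v : ℝⁿ → ℝ with bounded derivative, ∫_{Ω̆} ( f(x̆) v(x̆) + g(x̆) · ∇v(x̆) ) dx̆ = ∫_{Ω̂} ( |det DΦ(x̂)| f(Φ(x̂)) (v∘Φ)(x̂) + |det DΦ(x̂)| ( DΦ(x̂)⁻¹ g(Φ(x̂)) ) · ∇(v∘Φ)(x̂) ) dx̂. -/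
/-!
The identity is the change of variables formula for `Φ`, which maps `Ωhat` injectively onto
`Ωphys`, combined with a pointwise identity of the integrands. Pairing a vector with the gradient
is applying the derivative (`dotProduct_gradVec`), so the chain rule gives
`(DΦ⁻¹ g) · ∇(v ∘ Φ) = Dv (DΦ (DΦ⁻¹ g)) = g · ∇v` wherever `DΦ` is invertible. At points with
`det DΦ = 0` both integrands carry the factor `|det DΦ|` and vanish.
-/

open MeasureTheory Matrix

/-- The Jacobian matrix of a map `Φ : ℝⁿ → ℝⁿ` at a point. -/
noncomputable def jacobianMatrix {n : ℕ} (Φ : (Fin n → ℝ) → (Fin n → ℝ))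
    (x : Fin n → ℝ) : Matrix (Fin n) (Fin n) ℝ :=
  LinearMap.toMatrix' (fderiv ℝ Φ x : (Fin n → ℝ) →ₗ[ℝ] (Fin n → ℝ))

/-- The gradient of a scalar function on `ℝⁿ`, as a coordinate vector. -/
noncomputable def gradVec {n : ℕ} (u : (Fin n → ℝ) → ℝ) (x : Fin n → ℝ) :
    Fin n → ℝ :=
  fun i => fderiv ℝ u x (Pi.single i 1)

lemma dotProduct_gradVec {n : ℕ} (u : (Fin n → ℝ) → ℝ) (x w : Fin n → ℝ) :
    w ⬝ᵥ gradVec u x = fderiv ℝ u x w := by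
  rw [← ContinuousLinearMap.coe_coe, LinearMap.pi_apply_eq_sum_univ]
  simp only [dotProduct, gradVec, smul_eq_mul, ContinuousLinearMap.coe_coe]
  refine Finset.sum_congr rfl fun i _ => ?_
  congr 2 with j
  simp [Pi.single_apply, eq_comm]

lemma jacobianMatrix_mulVec {n : ℕ} (Φ : (Fin n → ℝ) → (Fin n → ℝ)) (x w : Fin n → ℝ) :
    (jacobianMatrix Φ x).mulVec w = fderiv ℝ Φ x w := by
  simp [jacobianMatrix, LinearMap.toMatrix'_mulVec]

lemma det_jacobianMatrix {n : ℕ} (Φ : (Fin n → ℝ) → (Fin n → ℝ)) (x : Fin n → ℝ) :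
    (jacobianMatrix Φ x).det = (fderiv ℝ Φ x).det := by
  simp [jacobianMatrix, LinearMap.det_toMatrix', ContinuousLinearMap.det]

/-- The Piola transform pairs with the gradient of the pullback as the original field pairs with
the original gradient. -/
lemma piola_dotProduct_gradVec_comp {n : ℕ} {Φ : (Fin n → ℝ) → (Fin n → ℝ)}
    {v : (Fin n → ℝ) → ℝ} {x : Fin n → ℝ} (hΦ : DifferentiableAt ℝ Φ x)
    (hv : DifferentiableAt ℝ v (Φ x)) (hdet : (jacobianMatrix Φ x).det ≠ 0) (w : Fin n → ℝ) :
    (jacobianMatrix Φ x)⁻¹.mulVec w ⬝ᵥ gradVec (v ∘ Φ) x = w ⬝ᵥ gradVec v (Φ x) := by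
  rw [dotProduct_gradVec, dotProduct_gradVec, fderiv_comp x hv hΦ,
    ContinuousLinearMap.comp_apply, ← jacobianMatrix_mulVec, Matrix.mulVec_mulVec,
    Matrix.mul_nonsing_inv _ (isUnit_iff_ne_zero.mpr hdet), Matrix.one_mulVec]

/-- **Change of variables for the right-hand side functional.**
Let `Ω̂, Ω̆ ⊆ ℝⁿ` be bounded open sets and `Φ : Ω̂ → Ω̆` a bijective `C¹` map with
`C¹` inverse, such that `Φ` and `Φ⁻¹` are Lipschitz.  Let `f : Ω̆ → ℝ` and
`g : Ω̆ → ℝⁿ` be continuous and bounded.  Then for every `C¹` function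
`v : ℝⁿ → ℝ` with bounded derivative,
`∫_{Ω̆} (f v + g · ∇v) = ∫_{Ω̂} (|det DΦ| (f∘Φ) (v∘Φ) + |det DΦ| (DΦ⁻¹ (g∘Φ)) · ∇(v∘Φ))`,
i.e. the physical right-hand side transforms into a parametric right-hand side of
the same structure, with vector datum given by the Piola transform. -/
theorem parametric_right_hand_side_change_of_variables
    (n : ℕ) (hn : 1 ≤ n)
    (Ωhat Ωphys : Set (Fin n → ℝ))
    (hΩhat_open : IsOpen Ωhat) (hΩphys_open : IsOpen Ωphys)
    (hΩhat_bdd : Bornology.IsBounded Ωhat) (hΩphys_bdd : Bornology.IsBounded Ωphys)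
    (Φ Ψ : (Fin n → ℝ) → (Fin n → ℝ))
    (hΦmaps : Set.MapsTo Φ Ωhat Ωphys) (hΨmaps : Set.MapsTo Ψ Ωphys Ωhat)
    (hΨΦ : ∀ x ∈ Ωhat, Ψ (Φ x) = x) (hΦΨ : ∀ y ∈ Ωphys, Φ (Ψ y) = y)
    (hΦC1 : ContDiffOn ℝ 1 Φ Ωhat) (hΨC1 : ContDiffOn ℝ 1 Ψ Ωphys)
    (KΦ KΨ : NNReal)
    (hΦlip : LipschitzOnWith KΦ Φ Ωhat) (hΨlip : LipschitzOnWith KΨ Ψ Ωphys)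
    (f : (Fin n → ℝ) → ℝ) (g : (Fin n → ℝ) → (Fin n → ℝ))
    (hf : ContinuousOn f Ωphys) (hg : ContinuousOn g Ωphys)
    (Cf : ℝ) (hfb : ∀ x ∈ Ωphys, |f x| ≤ Cf)
    (Cg : ℝ) (hgb : ∀ x ∈ Ωphys, ‖g x‖ ≤ Cg)
    (v : (Fin n → ℝ) → ℝ) (hv : ContDiff ℝ 1 v)
    (Cv : ℝ) (hvb : ∀ x, ‖fderiv ℝ v x‖ ≤ Cv) :
    ∫ x in Ωphys, (f x * v x + g x ⬝ᵥ gradVec v x) =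
      ∫ x in Ωhat,
        (|(jacobianMatrix Φ x).det| * f (Φ x) * (v ∘ Φ) x +
          |(jacobianMatrix Φ x).det| *
            (((jacobianMatrix Φ x)⁻¹.mulVec (g (Φ x))) ⬝ᵥ gradVec (v ∘ Φ) x)) := by
  have hΦd : ∀ x ∈ Ωhat, DifferentiableAt ℝ Φ x := fun x hx =>
    (hΦC1.differentiableOn one_ne_zero).differentiableAt (hΩhat_open.mem_nhds hx)
  have himage : Φ '' Ωhat = Ωphys :=
    Set.Subset.antisymm hΦmaps.image_subset fun y hy => ⟨Ψ y, hΨmaps hy, hΦΨ y hy⟩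
  have hinj : Set.InjOn Φ Ωhat := fun x hx y hy hxy => by
    rw [← hΨΦ x hx, hxy, hΨΦ y hy]
  conv_lhs => rw [← himage]
  rw [integral_image_eq_integral_abs_det_fderiv_smul volume hΩhat_open.measurableSet
    (fun x hx => (hΦd x hx).hasFDerivAt.hasFDerivWithinAt) hinj]
  refine setIntegral_congr_fun hΩhat_open.measurableSet fun x hx => ?_
  simp only [smul_eq_mul, ← det_jacobianMatrix, Function.comp_apply]
  by_cases hdet : (jacobianMatrix Φ x).det = 0
  · simp [hdet]
  · rw [piola_dotProduct_gradVec_comp (hΦd x hx) (hv.differentiable one_ne_zero _) hdet]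
    ring
end

section
/- Let Ω̂, Ω̆ ⊆ ℝⁿ be open sets and Φ : Ω̂ → Ω̆ a bijective twice continuously differentiable map with twice continuously differentiable inverse, satisfying det DΦ(x̂) > 0 for all x̂ ∈ Ω̂. Let g : Ω̆ → ℝⁿ be continuously differentiable, and define the Piola transform ĝ : Ω̂ → ℝⁿ by ĝ(x̂) = det DΦ(x̂) · DΦ(x̂)⁻¹ g(Φ(x̂)). Then for every x̂ ∈ Ω̂, div ĝ(x̂) = det DΦ(x̂) · (div g)(Φ(x̂)). -/
/-!
Since `det A • A⁻¹ = adj A` for invertible `A`, the Piola transform is `ĝ = adj (DΦ) · (g ∘ Φ)`.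
By the product rule its divergence is the sum of two terms. In the one where `g ∘ Φ` is
differentiated, the chain rule and `DΦ · adj (DΦ) = det DΦ • 1` give `det DΦ · (div g) ∘ Φ`.
The other one vanishes because the columns of `adj (DΦ)` are divergence free
(`exists_hasFDerivAt_adjugate_sum_eq_zero`): with `C = adj M`, `M = DΦ`, differentiating
`C M = det M • 1` and using Jacobi's formula (`hasFDerivAt_det_of_entries`) gives
`det M • ∂ₖC = tr (C ∂ₖM) • C - C (∂ₖM) C`; in the sum over `k` of the entries `(k, j)` the two
terms on the right cancel, by the symmetry of the second derivative of `Φ`.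
-/

open Matrix

/-- The divergence of a vector field on `ℝⁿ`. -/
noncomputable def divergence {n : ℕ} (g : (Fin n → ℝ) → (Fin n → ℝ))
    (x : Fin n → ℝ) : ℝ :=
  ∑ i, fderiv ℝ g x (Pi.single i 1) i

/-- **Jacobi's formula**, for a matrix-valued map given by its entries:
`d(det M) = tr (adj M · dM)`. -/
theorem hasFDerivAt_det_of_entries {n : ℕ} {M : (Fin n → ℝ) → Matrix (Fin n) (Fin n) ℝ}
    {M' : Fin n → Fin n → (Fin n → ℝ) →L[ℝ] ℝ} {x : Fin n → ℝ}
    (hM : ∀ i j, HasFDerivAt (fun y => M y i j) (M' i j) x) :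
    HasFDerivAt (fun y => (M y).det)
      (∑ i, ∑ j, (M x).adjugate j i • M' i j) x := by
  -- The determinant as a continuous multilinear function of the rows.
  let D : ContinuousMultilinearMap ℝ (fun _ : Fin n => Fin n → ℝ) ℝ :=
    { (Matrix.detRowAlternating (n := Fin n) (R := ℝ)).toMultilinearMap with
      cont := by
        change Continuous fun A : Matrix (Fin n) (Fin n) ℝ => A.det
        exact continuous_id.matrix_det }
  have h := HasFDerivAt.multilinear_comp (f := D) (g := fun i y => M y i)
    (g' := fun i => ContinuousLinearMap.pi (M' i)) (x := x)
    (fun i => hasFDerivAt_pi.2 (hM i))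
  refine h.congr_fderiv ?_
  ext v
  simp only [_root_.sum_apply, ContinuousLinearMap.comp_apply,
    _root_.smul_apply, smul_eq_mul]
  refine Finset.sum_congr rfl fun i _ => ?_
  change ((M x).updateRow i (fun j => M' i j v)).det = _
  rw [← Matrix.cramer_transpose_apply, Matrix.cramer_eq_adjugate_mulVec,
    ← Matrix.adjugate_transpose]
  rfl

/-- The cofactor matrix of a Jacobian matrix is divergence free. The symmetry hypothesis `hsymm`
says that `M'` is a second derivative, and the column index of `adj M` is held fixed. -/
theorem exists_hasFDerivAt_adjugate_sum_eq_zero {n : ℕ}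
    {M : (Fin n → ℝ) → Matrix (Fin n) (Fin n) ℝ}
    {M' : Fin n → Fin n → (Fin n → ℝ) →L[ℝ] ℝ} {x : Fin n → ℝ}
    (hM : ∀ i j, HasFDerivAt (fun y => M y i j) (M' i j) x)
    (hsymm : ∀ i j k, M' i j (Pi.single k 1) = M' i k (Pi.single j 1))
    (hdet : (M x).det ≠ 0) :
    ∃ C' : Fin n → Fin n → (Fin n → ℝ) →L[ℝ] ℝ,
      (∀ i j, HasFDerivAt (fun y => (M y).adjugate i j) (C' i j) x) ∧
      ∀ j, ∑ i, C' i j (Pi.single i 1) = 0 := by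
  have hdiff : ∀ i j, DifferentiableAt ℝ (fun y => (M y).adjugate i j) x := by
    intro i j
    simp only [Matrix.adjugate_apply]
    refine (hasFDerivAt_det_of_entries
      (M' := fun k l => if k = j then 0 else M' k l) fun k l => ?_).differentiableAt
    by_cases hk : k = j
    · subst hk
      simpa using hasFDerivAt_const _ _
    · simpa [hk, Matrix.updateRow_apply] using hM k l
  choose C' hC' using hdiff
  refine ⟨C', hC', fun j => ?_⟩
  set C := (M x).adjugate with hC
  set d := (M x).det with hd
  -- The differential of the entries of `adj M * M = det M • 1`.
  have key : ∀ k l v, ∑ m, (C k m * M' m l v + M x m l * C' k m v) =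
      (∑ i, ∑ j, C j i * M' i j v) * (1 : Matrix (Fin n) (Fin n) ℝ) k l := by
    intro k l v
    have h1 : HasFDerivAt (fun y => ∑ m, (M y).adjugate k m * M y m l) _ x :=
      HasFDerivAt.fun_sum fun m _ => (hC' k m).mul (hM m l)
    have h2 := (hasFDerivAt_det_of_entries hM).mul_const ((1 : Matrix (Fin n) (Fin n) ℝ) k l)
    have h3 : (fun y => ∑ m, (M y).adjugate k m * M y m l) =
        fun y => (M y).det * (1 : Matrix (Fin n) (Fin n) ℝ) k l := by
      funext y
      rw [← Matrix.mul_apply, Matrix.adjugate_mul]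
      rfl
    rw [h3] at h1
    have h4 := congrArg (fun L => L v) (h1.unique h2)
    simpa [_root_.sum_apply, mul_comm] using h4
  -- Multiplying by `adj M` on the right isolates `det M • C'`.
  have key2 : ∀ k v, d * C' k j v =
      (∑ i, ∑ l, C l i * M' i l v) * C k j - ∑ l, ∑ m, C k m * M' m l v * C l j := by
    intro k v
    have e1 : ∑ l, (∑ m, (C k m * M' m l v + M x m l * C' k m v)) * C l j =
        (∑ i, ∑ l, C l i * M' i l v) * C k j := by
      simp_rw [key, Matrix.one_apply]
      simp
    have e2 : ∑ l, ∑ m, M x m l * C' k m v * C l j = d * C' k j v := by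
      rw [Finset.sum_comm]
      have : ∀ m, ∑ l, M x m l * C' k m v * C l j =
          C' k m v * (d * (1 : Matrix (Fin n) (Fin n) ℝ) m j) := by
        intro m
        have : (M x * C) m j = d * (1 : Matrix (Fin n) (Fin n) ℝ) m j := by
          rw [hC, Matrix.mul_adjugate]; rfl
        rw [← this, Matrix.mul_apply, Finset.mul_sum]
        exact Finset.sum_congr rfl fun l _ => by ring
      simp_rw [this, Matrix.one_apply]
      simp [mul_comm]
    rw [← e1, ← e2, ← Finset.sum_sub_distrib]
    refine Finset.sum_congr rfl fun l _ => ?_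
    rw [Finset.sum_mul, ← Finset.sum_sub_distrib]
    exact Finset.sum_congr rfl fun m _ => by ring
  refine (mul_eq_zero.1 ?_).resolve_left hdet
  rw [Finset.mul_sum]
  simp_rw [key2]
  rw [Finset.sum_sub_distrib, sub_eq_zero]
  -- Both sides are the triple sum of `C l i * ∂ₖ M i l * C k j`, by symmetry in `k` and `l`.
  calc ∑ k, (∑ i, ∑ l, C l i * M' i l (Pi.single k 1)) * C k j
      = ∑ k, ∑ l, ∑ i, C l i * M' i k (Pi.single l 1) * C k j := by
        refine Finset.sum_congr rfl fun k _ => ?_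
        rw [Finset.sum_comm, Finset.sum_mul]
        refine Finset.sum_congr rfl fun l _ => ?_
        rw [Finset.sum_mul]
        exact Finset.sum_congr rfl fun i _ => by rw [hsymm i l k]
    _ = _ := Finset.sum_comm

/-- **Piola identity.**
Let `Ω̂, Ω̆ ⊆ ℝⁿ` be open sets and `Φ : Ω̂ → Ω̆` a bijective `C²` map with `C²`
inverse and everywhere positive Jacobian determinant on `Ω̂`.  Let `g : Ω̆ → ℝⁿ`
be `C¹` and let `ĝ(x̂) = det DΦ(x̂) · DΦ(x̂)⁻¹ g(Φ(x̂))` be its Piola transform.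
Then `div ĝ(x̂) = det DΦ(x̂) · (div g)(Φ(x̂))` for every `x̂ ∈ Ω̂`. -/
theorem piola_identity
    (n : ℕ) (hn : 1 ≤ n)
    (Ωhat Ωphys : Set (Fin n → ℝ))
    (hΩhat_open : IsOpen Ωhat) (hΩphys_open : IsOpen Ωphys)
    (Φ Ψ : (Fin n → ℝ) → (Fin n → ℝ))
    (hΦmaps : Set.MapsTo Φ Ωhat Ωphys) (hΨmaps : Set.MapsTo Ψ Ωphys Ωhat)
    (hΨΦ : ∀ x ∈ Ωhat, Ψ (Φ x) = x) (hΦΨ : ∀ y ∈ Ωphys, Φ (Ψ y) = y)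
    (hΦC2 : ContDiffOn ℝ 2 Φ Ωhat) (hΨC2 : ContDiffOn ℝ 2 Ψ Ωphys)
    (hdet : ∀ x ∈ Ωhat, 0 < (jacobianMatrix Φ x).det)
    (g : (Fin n → ℝ) → (Fin n → ℝ)) (hg : ContDiffOn ℝ 1 g Ωphys) :
    ∀ x ∈ Ωhat,
      divergence
        (fun y => (jacobianMatrix Φ y).det • ((jacobianMatrix Φ y)⁻¹.mulVec (g (Φ y)))) x =
        (jacobianMatrix Φ x).det * divergence g (Φ x) := by
  intro x hx
  have hΦx : ContDiffAt ℝ 2 Φ x := hΦC2.contDiffAt (hΩhat_open.mem_nhds hx)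
  have hgx : DifferentiableAt ℝ g (Φ x) :=
    (hg.contDiffAt (hΩphys_open.mem_nhds (hΦmaps hx))).differentiableAt (by norm_num)
  have hΦd : DifferentiableAt ℝ Φ x := hΦx.differentiableAt (by norm_num)
  have hD2 : HasFDerivAt (fderiv ℝ Φ) (fderiv ℝ (fderiv ℝ Φ) x) x :=
    ((hΦx.fderiv_right (m := 1) (by norm_num)).differentiableAt (by norm_num)).hasFDerivAt
  have hentry : ∀ y i j, jacobianMatrix Φ y i j = fderiv ℝ Φ y (Pi.single j 1) i := by
    intro y i j
    simp [jacobianMatrix, LinearMap.toMatrix'_apply]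
  have hM : ∀ i j, HasFDerivAt (fun y => jacobianMatrix Φ y i j)
      ((ContinuousLinearMap.proj (R := ℝ) (φ := fun _ : Fin n => ℝ) i).comp
        ((ContinuousLinearMap.apply ℝ (Fin n → ℝ) (Pi.single j (1 : ℝ))).comp
          (fderiv ℝ (fderiv ℝ Φ) x))) x := by
    intro i j
    simp_rw [hentry]
    have h1 := (ContinuousLinearMap.apply ℝ (Fin n → ℝ)
      (Pi.single j (1 : ℝ) : Fin n → ℝ)).hasFDerivAt.comp x hD2
    exact (ContinuousLinearMap.proj (R := ℝ) (φ := fun _ : Fin n => ℝ) i).hasFDerivAt.comp x h1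
  have hsymm : IsSymmSndFDerivAt ℝ Φ x := hΦx.isSymmSndFDerivAt (by simp)
  have hdetx : (jacobianMatrix Φ x).det ≠ 0 := (hdet x hx).ne'
  obtain ⟨C', hC', hC'0⟩ := exists_hasFDerivAt_adjugate_sum_eq_zero hM
    (fun i j k => congrFun (hsymm.eq _ _) i) hdetx
  -- Near `x` the Piola transform is `adj DΦ · (g ∘ Φ)`.
  have hev : (fun y => (jacobianMatrix Φ y).det •
      ((jacobianMatrix Φ y)⁻¹.mulVec (g (Φ y)))) =ᶠ[nhds x]
      fun y => fun i => ∑ j, (jacobianMatrix Φ y).adjugate i j * g (Φ y) j := by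
    filter_upwards [hΩhat_open.mem_nhds hx] with y hy
    rw [← Matrix.smul_mulVec, Matrix.inv_def, smul_smul, Ring.inverse_eq_inv',
      mul_inv_cancel₀ (hdet y hy).ne', one_smul]
    rfl
  have hgΦ : ∀ j, HasFDerivAt (fun y => g (Φ y) j)
      ((ContinuousLinearMap.proj (R := ℝ) (φ := fun _ : Fin n => ℝ) j).comp
        ((fderiv ℝ g (Φ x)).comp (fderiv ℝ Φ x))) x := fun j =>
    (ContinuousLinearMap.proj (R := ℝ) (φ := fun _ : Fin n => ℝ) j).hasFDerivAt.comp x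
      (hgx.hasFDerivAt.comp x hΦd.hasFDerivAt)
  have hP := hasFDerivAt_pi.2 fun i : Fin n =>
    HasFDerivAt.fun_sum (u := Finset.univ) fun j _ => (hC' i j).fun_mul (hgΦ j)
  set J := jacobianMatrix Φ x with hJ
  have hchain : ∀ i j, fderiv ℝ g (Φ x) (fderiv ℝ Φ x (Pi.single i 1)) j =
      ∑ k, J k i * fderiv ℝ g (Φ x) (Pi.single k 1) j := by
    intro i j
    conv_lhs => rw [pi_eq_sum_univ' (fderiv ℝ Φ x (Pi.single i 1))]
    simp [map_sum, hentry, hJ, Finset.sum_apply]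
  have hJC : ∀ k j, ∑ i, J k i * J.adjugate i j =
      J.det * (1 : Matrix (Fin n) (Fin n) ℝ) k j := by
    intro k j
    rw [← Matrix.mul_apply, Matrix.mul_adjugate]
    rfl
  unfold divergence
  rw [hev.fderiv_eq, hP.fderiv]
  simp only [ContinuousLinearMap.pi_apply, _root_.sum_apply,
    _root_.add_apply, _root_.smul_apply, smul_eq_mul,
    ContinuousLinearMap.comp_apply, ContinuousLinearMap.proj_apply, hchain,
    Finset.sum_add_distrib]
  have hfirst : ∑ i, ∑ j, g (Φ x) j * C' i j (Pi.single i 1) = 0 := by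
    rw [Finset.sum_comm]
    simp [← Finset.mul_sum, hC'0]
  have hsecond : ∑ i, ∑ j, J.adjugate i j *
      ∑ k, J k i * fderiv ℝ g (Φ x) (Pi.single k 1) j =
      J.det * ∑ i, fderiv ℝ g (Φ x) (Pi.single i 1) i := by
    calc _ = ∑ j, ∑ k, (∑ i, J k i * J.adjugate i j) *
          fderiv ℝ g (Φ x) (Pi.single k 1) j := by
          rw [Finset.sum_comm]
          refine Finset.sum_congr rfl fun j _ => ?_
          simp_rw [Finset.mul_sum, Finset.sum_mul]
          rw [Finset.sum_comm]
          exact Finset.sum_congr rfl fun k _ => Finset.sum_congr rfl fun i _ => by ring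
      _ = _ := by
          simp_rw [hJC, Matrix.one_apply]
          simp [Finset.mul_sum]
  rw [hsecond, hfirst]
  ring
end

section
/- Let d ≥ 1, r ∈ ℕ, p ∈ [1,∞), s ∈ (0,1), and μ₀ > 0. Then there exists a constant C > 0, depending only on d, r, s, p and μ₀, such that for every d-dimensional simplex T ⊆ ℝ^d with shape measure μ(T) ≤ μ₀ and every Lagrange point x ∈ 𝔏_r(T), the Lagrange basis polynomial Φ^T_{r,x} satisfies |Φ^T_{r,x}|_{W^{s,p}(T)} ≤ C · h_T^{d/p − s}, where h_T is the diameter of T. -/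
/-!
Writing `h` for the diameter of the simplex `T`, everything reduces to the Lipschitz estimate
`|Φ w - Φ v| ≤ (K / h) ‖w - v‖` on `T` with `K` depending only on `d`, `r`, `μ₀`.

*From Lipschitz to Gagliardo.* The estimate bounds the integrand by
`(K / h) ^ p * ‖x - y‖ ^ (p (1 - s) - d)`. The exponent exceeds `-d`, so by scaling the inner
integral over the ball of radius `h` around `x` (which contains `T`) is a constant times
`h ^ (p (1 - s))`; the outer integral costs `vol T ≤ vol (B₁) h ^ d`. In total this is a constant
times `h ^ (d - s p)` (`gagliardo_bound_of_lipschitz`).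

*The Lipschitz estimate.* In the coordinates `u` given by `w = x₀ + ∑ (uᵢ / r) (xᵢ - x₀)` the
Lagrange points are the lattice points `m ∈ ℕ ^ d` with `|m| ≤ r`, and `Φ` becomes a polynomial of
degree at most `r` bounded by `1` at them. Such a polynomial is a combination, with bounded
coefficients, of the finitely many explicit nodal polynomials `nodalPoly d r m`; this is
unisolvence, `eq_zero_of_eval_lattice`, which follows from a dimension count because the same
multi-indices label the monomials and the nodes. Hence it is Lipschitz in `u`, uniformly
(`exists_lipschitz_of_lattice_bound`).

The coordinates are `O(1 / h)`-Lipschitz functions of `w` (`coords_lipschitz`): the edge matrix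
divided by `h` has entries bounded by `1`, so its adjugate has entries bounded by `d!`, and its
determinant is bounded below because `vol T` is at most a constant times the determinant of the
edge matrix while `h ^ d ≤ μ₀ vol T`.
-/

open MeasureTheory
open scoped Classical

/-- The Sobolev–Slobodeckij (Gagliardo) seminorm
`( ∫_T ∫_T |v(x) − v(y)|^p / ‖x − y‖^{d + s p} dx dy )^{1/p}` of a function on a
subset `T` of Euclidean `d`-space. -/
noncomputable def gagliardoSeminorm (d : ℕ) (s p : ℝ)
    (T : Set (EuclideanSpace ℝ (Fin d))) (v : EuclideanSpace ℝ (Fin d) → ℝ) : ℝ :=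
  (∫ x in T, ∫ y in T, |v x - v y| ^ p / ‖x - y‖ ^ ((d : ℝ) + s * p)) ^ (1 / p)

/-- The set of degree-`r` Lagrange points of the simplex with vertices
`x 0, …, x d`, namely all points `(α₀ x₀ + … + α_d x_d)/r` with `|α| = r`. -/
def lagrangePoints (d r : ℕ) (x : Fin (d + 1) → EuclideanSpace ℝ (Fin d)) :
    Set (EuclideanSpace ℝ (Fin d)) :=
  {pt | ∃ α : Fin (d + 1) → ℕ, (∑ i, α i) = r ∧
    pt = (r : ℝ)⁻¹ • ∑ i, (α i : ℝ) • x i}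

/-! ### Unisolvence of the principal lattice -/

/-- A polynomial is bounded and Lipschitz on the cube `[-ρ, ρ] ^ d`. The bound `B` is carried along
because the product step of the induction needs it. -/
theorem poly_lipschitz (d : ℕ) (ρ : ℝ) (hρ : 0 ≤ ρ) (Q : MvPolynomial (Fin d) ℝ) :
    ∃ B L : ℝ, 0 ≤ B ∧ 0 ≤ L ∧
      (∀ u : Fin d → ℝ, (∀ i, |u i| ≤ ρ) → |MvPolynomial.eval u Q| ≤ B) ∧
      ∀ u v : Fin d → ℝ, (∀ i, |u i| ≤ ρ) → (∀ i, |v i| ≤ ρ) →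
        |MvPolynomial.eval u Q - MvPolynomial.eval v Q| ≤ L * ∑ i, |u i - v i| := by
  induction Q using MvPolynomial.induction_on with
  | C a => exact ⟨|a|, 0, by positivity, le_rfl, by simp, by simp⟩
  | add P Q hP hQ =>
    obtain ⟨B, L, hB, hL, h1, h2⟩ := hP
    obtain ⟨B', L', hB', hL', h1', h2'⟩ := hQ
    refine ⟨B + B', L + L', by positivity, by positivity, fun u hu => ?_, fun u v hu hv => ?_⟩
    · rw [map_add]
      exact (abs_add_le _ _).trans (add_le_add (h1 u hu) (h1' u hu))
    · rw [map_add, map_add, add_sub_add_comm, add_mul]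
      exact (abs_add_le _ _).trans (add_le_add (h2 u v hu hv) (h2' u v hu hv))
  | mul_X P i hP =>
    obtain ⟨B, L, hB, hL, h1, h2⟩ := hP
    refine ⟨B * ρ, L * ρ + B, by positivity, by positivity, fun u hu => ?_, fun u v hu hv => ?_⟩
    · rw [map_mul, abs_mul, MvPolynomial.eval_X]
      exact mul_le_mul (h1 u hu) (hu i) (abs_nonneg _) hB
    · simp only [map_mul, MvPolynomial.eval_X]
      have e : MvPolynomial.eval u P * u i - MvPolynomial.eval v P * v i =
        (MvPolynomial.eval u P - MvPolynomial.eval v P) * u i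
          + MvPolynomial.eval v P * (u i - v i) := by ring
      rw [e, add_mul]
      have hi : |u i - v i| ≤ ∑ i, |u i - v i| :=
        Finset.single_le_sum (f := fun i => |u i - v i|) (fun _ _ => abs_nonneg _)
          (Finset.mem_univ i)
      have hS : 0 ≤ ∑ i, |u i - v i| := (abs_nonneg _).trans hi
      refine (abs_add_le _ _).trans (add_le_add ?_ ?_)
      · rw [abs_mul, mul_right_comm]
        exact mul_le_mul (h2 u v hu hv) (hu i) (abs_nonneg _) (by positivity)
      · rw [abs_mul]
        exact mul_le_mul (h1 v hv) hi (abs_nonneg _) hB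

/-- The unnormalised Lagrange polynomial of the node `m` in the lattice `{m ∈ ℕ ^ d : |m| ≤ r}`:
the product of the falling factorials of order `mᵢ` in the variables `Xᵢ` and of the one of order
`r - |m|` in the complementary variable `r - ∑ Xᵢ`. -/
noncomputable def nodalPoly (d r : ℕ) (m : Fin d → ℕ) : MvPolynomial (Fin d) ℝ :=
  (∏ i, ∏ j ∈ Finset.range (m i), (MvPolynomial.X i - MvPolynomial.C (j : ℝ))) *
    ∏ j ∈ Finset.range (r - ∑ i, m i),
      (MvPolynomial.C (r : ℝ) - ∑ i, MvPolynomial.X i - MvPolynomial.C (j : ℝ))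

theorem nodalPoly_totalDegree (d r : ℕ) (m : Fin d → ℕ) (hm : ∑ i, m i ≤ r) :
    (nodalPoly d r m).totalDegree ≤ r := by
  have h1 : ∀ i : Fin d, ∀ j : ℕ,
      (MvPolynomial.X i - MvPolynomial.C (j : ℝ) : MvPolynomial (Fin d) ℝ).totalDegree ≤ 1 :=
    fun i j => (MvPolynomial.totalDegree_sub _ _).trans
      (max_le (by simp) (by rw [MvPolynomial.totalDegree_C]; exact zero_le_one))
  have h2 : ∀ j : ℕ,
      (MvPolynomial.C (r : ℝ) - ∑ i, MvPolynomial.X i - MvPolynomial.C (j : ℝ) :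
        MvPolynomial (Fin d) ℝ).totalDegree ≤ 1 := fun j => by
    refine (MvPolynomial.totalDegree_sub _ _).trans (max_le ?_ (by rw [MvPolynomial.totalDegree_C]; exact zero_le_one))
    refine (MvPolynomial.totalDegree_sub _ _).trans (max_le (by rw [MvPolynomial.totalDegree_C]; exact zero_le_one) ?_)
    exact MvPolynomial.totalDegree_finsetSum_le (by simp)
  refine (MvPolynomial.totalDegree_mul _ _).trans ?_
  have e1 : (∏ i, ∏ j ∈ Finset.range (m i), (MvPolynomial.X i - MvPolynomial.C (j : ℝ)) :
      MvPolynomial (Fin d) ℝ).totalDegree ≤ ∑ i, m i := by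
    refine (MvPolynomial.totalDegree_finsetProd _ _).trans (Finset.sum_le_sum fun i _ => ?_)
    refine (MvPolynomial.totalDegree_finsetProd _ _).trans ?_
    exact (Finset.sum_le_sum fun j _ => h1 i j).trans (by simp)
  have e2 : (∏ j ∈ Finset.range (r - ∑ i, m i),
      (MvPolynomial.C (r : ℝ) - ∑ i, MvPolynomial.X i - MvPolynomial.C (j : ℝ)) :
      MvPolynomial (Fin d) ℝ).totalDegree ≤ r - ∑ i, m i := by
    refine (MvPolynomial.totalDegree_finsetProd _ _).trans ?_
    exact (Finset.sum_le_sum fun j _ => h2 j).trans (by simp)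
  omega

theorem nodalPoly_eval_self (d r : ℕ) (m : Fin d → ℕ) (hm : ∑ i, m i ≤ r) :
    MvPolynomial.eval (fun i => (m i : ℝ)) (nodalPoly d r m) ≠ 0 := by
  simp only [nodalPoly, map_mul, map_prod, map_sub, map_sum, MvPolynomial.eval_X,
    MvPolynomial.eval_C]
  refine mul_ne_zero (Finset.prod_ne_zero_iff.2 fun i _ => Finset.prod_ne_zero_iff.2 fun j hj => ?_)
    (Finset.prod_ne_zero_iff.2 fun j hj => ?_)
  · rw [Finset.mem_range] at hj
    have : (j : ℝ) < m i := by exact_mod_cast hj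
    exact (sub_pos.2 this).ne'
  · rw [Finset.mem_range] at hj
    have : ((j + ∑ i, m i : ℕ) : ℝ) < r := by exact_mod_cast (by omega)
    push_cast at this
    have h : (0 : ℝ) < (r : ℝ) - ∑ i, (m i : ℝ) - j := by linarith
    exact ne_of_gt h

/-- Since the coordinates of a node, completed by `r - |m|`, sum to `r`, a node `n ≠ m` has a
completed coordinate strictly below that of `m`, and the corresponding falling factorial
vanishes. -/
theorem nodalPoly_eval_ne (d r : ℕ) (m n : Fin d → ℕ) (hm : ∑ i, m i ≤ r) (hn : ∑ i, n i ≤ r)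
    (h : n ≠ m) : MvPolynomial.eval (fun i => (n i : ℝ)) (nodalPoly d r m) = 0 := by
  simp only [nodalPoly, map_mul, map_prod, map_sub, map_sum, MvPolynomial.eval_X,
    MvPolynomial.eval_C]
  by_cases hlt : ∃ i, n i < m i
  · obtain ⟨i, hi⟩ := hlt
    rw [mul_eq_zero]
    left
    exact Finset.prod_eq_zero (Finset.mem_univ i)
      (Finset.prod_eq_zero (Finset.mem_range.2 hi) (sub_self _))
  · push Not at hlt
    have hs : ∑ i, m i < ∑ i, n i := by
      obtain ⟨i, hi⟩ := Function.ne_iff.1 h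
      exact Finset.sum_lt_sum (fun i _ => hlt i)
        ⟨i, Finset.mem_univ i, lt_of_le_of_ne (hlt i) (Ne.symm hi)⟩
    rw [mul_eq_zero]
    right
    refine Finset.prod_eq_zero (i := r - ∑ i, n i) (Finset.mem_range.2 (by omega)) ?_
    rw [Nat.cast_sub hn]
    push_cast
    ring

/-- Unisolvence of the principal lattice: evaluation at the lattice points is surjective on
polynomials of degree at most `r` by the nodal polynomials, hence injective, as both spaces have a
basis labelled by the multi-indices `n` with `|n| ≤ r`. -/
theorem eq_zero_of_eval_lattice (d r : ℕ) (Q : MvPolynomial (Fin d) ℝ) (hQ : Q.totalDegree ≤ r)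
    (h : ∀ m : Fin d → ℕ, ∑ i, m i ≤ r → MvPolynomial.eval (fun i => (m i : ℝ)) Q = 0) :
    Q = 0 := by
  let S : Set (Fin d →₀ ℕ) := {n | (n.sum fun _ e => e) ≤ r}
  have hS : ∀ n : S, ∑ i, (n : Fin d →₀ ℕ) i ≤ r := fun n => by
    have := n.2
    simp only [S, Set.mem_ofPred_eq] at this
    rwa [Finsupp.sum_fintype _ _ (fun _ => rfl)] at this
  have hfin : Finite S := by
    have : Module.Finite ℝ (MvPolynomial.restrictSupport ℝ S) :=
      inferInstanceAs (Module.Finite ℝ (MvPolynomial.restrictTotalDegree (Fin d) ℝ r))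
    exact Module.Finite.finite_basis (MvPolynomial.basisRestrictSupport ℝ S)
  have := Fintype.ofFinite S
  let E : MvPolynomial.restrictTotalDegree (Fin d) ℝ r →ₗ[ℝ] (S → ℝ) :=
    { toFun := fun P n => MvPolynomial.eval (fun i => ((n : Fin d →₀ ℕ) i : ℝ)) P.1
      map_add' := fun P P' => by ext; simp
      map_smul' := fun c P => by ext; simp [MvPolynomial.smul_eval] }
  have hdim : Module.finrank ℝ (MvPolynomial.restrictTotalDegree (Fin d) ℝ r)
      = Module.finrank ℝ (S → ℝ) := by
    rw [Module.finrank_fintype_fun_eq_card]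
    exact Module.finrank_eq_card_basis (MvPolynomial.basisRestrictSupport ℝ S)
  have hsurj : Function.Surjective E := by
    intro f
    let φ : S → MvPolynomial.restrictTotalDegree (Fin d) ℝ r := fun n =>
      ⟨nodalPoly d r n, (MvPolynomial.mem_restrictTotalDegree _ _ _).2
        (nodalPoly_totalDegree d r _ (hS n))⟩
    refine ⟨∑ n, (f n / E (φ n) n) • φ n, ?_⟩
    ext k
    rw [map_sum, Finset.sum_apply, Finset.sum_eq_single k]
    · rw [map_smul, Pi.smul_apply, smul_eq_mul]
      exact div_mul_cancel₀ _ (nodalPoly_eval_self d r _ (hS k))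
    · intro n _ hn
      rw [map_smul, Pi.smul_apply, smul_eq_mul]
      have : E (φ n) k = 0 := nodalPoly_eval_ne d r _ _ (hS n) (hS k)
        (fun e => hn (Subtype.ext (DFunLike.coe_injective e.symm)))
      rw [this, mul_zero]
    · simp
  have hinj := (LinearMap.injective_iff_surjective_of_finrank_eq_finrank hdim).2 hsurj
  have h0 : E ⟨Q, (MvPolynomial.mem_restrictTotalDegree _ _ _).2 hQ⟩ = 0 := by
    ext n
    exact h _ (hS n)
  have := (map_eq_zero_iff E hinj).1 h0
  exact congrArg Subtype.val this

/-- Polynomials of degree at most `r` that are bounded by `1` at the lattice points of the simplex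
`{u ≥ 0, ∑ uᵢ ≤ r}` are Lipschitz on `[-r, r] ^ d` with a common constant. -/
theorem exists_lipschitz_of_lattice_bound (d r : ℕ) :
    ∃ L : ℝ, 0 ≤ L ∧ ∀ Q : MvPolynomial (Fin d) ℝ, Q.totalDegree ≤ r →
      (∀ m : Fin d → ℕ, ∑ i, m i ≤ r → |MvPolynomial.eval (fun i => (m i : ℝ)) Q| ≤ 1) →
      ∀ u v : Fin d → ℝ, (∀ i, |u i| ≤ r) → (∀ i, |v i| ≤ r) →
        |MvPolynomial.eval u Q - MvPolynomial.eval v Q| ≤ L * ∑ i, |u i - v i| := by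
  let I : Finset (Fin d → ℕ) :=
    (Fintype.piFinset fun _ : Fin d => Finset.range (r + 1)).filter fun m => ∑ i, m i ≤ r
  have hI : ∀ m : Fin d → ℕ, m ∈ I ↔ ∑ i, m i ≤ r := by
    intro m
    simp only [I, Finset.mem_filter, Fintype.mem_piFinset, Finset.mem_range,
      and_iff_right_iff_imp]
    intro h i
    have := Finset.single_le_sum (f := m) (fun _ _ => Nat.zero_le _) (Finset.mem_univ i)
    omega
  choose B L hB hL _ hLip using
    fun m => poly_lipschitz d r (Nat.cast_nonneg r) (nodalPoly d r m)
  let c : (Fin d → ℕ) → ℝ := fun m => MvPolynomial.eval (fun i => (m i : ℝ)) (nodalPoly d r m)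
  refine ⟨∑ m ∈ I, |(c m)⁻¹| * L m,
    Finset.sum_nonneg fun m _ => mul_nonneg (abs_nonneg _) (hL m), ?_⟩
  intro Q hQ hb u v hu hv
  let q : (Fin d → ℕ) → ℝ := fun m => MvPolynomial.eval (fun i => (m i : ℝ)) Q
  have key : Q = ∑ m ∈ I, MvPolynomial.C (q m * (c m)⁻¹) * nodalPoly d r m := by
    rw [← sub_eq_zero]
    refine eq_zero_of_eval_lattice d r _ ?_ ?_
    · refine (MvPolynomial.totalDegree_sub _ _).trans (max_le hQ ?_)
      refine MvPolynomial.totalDegree_finsetSum_le fun m hm => ?_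
      refine (MvPolynomial.totalDegree_mul _ _).trans ?_
      rw [MvPolynomial.totalDegree_C, zero_add]
      exact nodalPoly_totalDegree d r m ((hI m).1 hm)
    · intro n hn
      rw [map_sub, map_sum, Finset.sum_eq_single n]
      · rw [map_mul, MvPolynomial.eval_C, mul_assoc,
          inv_mul_cancel₀ (nodalPoly_eval_self d r n hn), mul_one, sub_self]
      · intro m hm hmn
        rw [map_mul, nodalPoly_eval_ne d r m n ((hI m).1 hm) hn hmn.symm, mul_zero]
      · exact fun h => absurd ((hI n).2 hn) h
  rw [key, map_sum, map_sum, ← Finset.sum_sub_distrib, Finset.sum_mul]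
  refine (Finset.abs_sum_le_sum_abs _ _).trans (Finset.sum_le_sum fun m hm => ?_)
  rw [map_mul (MvPolynomial.eval u), map_mul (MvPolynomial.eval v), MvPolynomial.eval_C,
    MvPolynomial.eval_C, ← mul_sub, abs_mul, abs_mul, mul_assoc |(c m)⁻¹|]
  refine mul_le_mul ?_ (hLip m u v hu hv) (abs_nonneg _) (abs_nonneg _)
  exact mul_le_of_le_one_left (abs_nonneg _) (hb m ((hI m).1 hm))

theorem totalDegree_bind_affine (d r : ℕ) (P : MvPolynomial (Fin d) ℝ) (hP : P.totalDegree ≤ r)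
    (f : Fin d → MvPolynomial (Fin d) ℝ) (hf : ∀ i, (f i).totalDegree ≤ 1) :
    (MvPolynomial.bind₁ f P).totalDegree ≤ r := by
  rw [MvPolynomial.bind₁, MvPolynomial.aeval_def, MvPolynomial.eval₂_eq]
  refine MvPolynomial.totalDegree_finsetSum_le fun m hm => ?_
  refine (MvPolynomial.totalDegree_mul _ _).trans ?_
  rw [MvPolynomial.algebraMap_eq, MvPolynomial.totalDegree_C, zero_add]
  refine (MvPolynomial.totalDegree_finsetProd _ _).trans ?_
  refine le_trans (Finset.sum_le_sum fun i _ => ?_) ((MvPolynomial.le_totalDegree hm).trans hP)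
  refine (MvPolynomial.totalDegree_pow _ _).trans ?_
  exact (Nat.mul_le_mul_left _ (hf i)).trans (by simp)

/-! ### From a Lipschitz bound to the Gagliardo seminorm -/

/-- The kernel `‖z‖ ^ (a - d)` with `a > 0` is integrable near the origin of `ℝ ^ d`. -/
theorem riesz_integrableOn (d : ℕ) (hd : 1 ≤ d) (a : ℝ) (ha : 0 < a)
    (S : Set (EuclideanSpace ℝ (Fin d))) (hS : Bornology.IsBounded S) :
    IntegrableOn (fun z : EuclideanSpace ℝ (Fin d) => ‖z‖ ^ (a - d)) S := by
  have hfr : Module.finrank ℝ (EuclideanSpace ℝ (Fin d)) = d := by simp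
  have hli : LocallyIntegrable (fun z : EuclideanSpace ℝ (Fin d) => ‖z‖ ^ (a - d)) volume := by
    refine locallyIntegrable_of_norm_le_rpow (C := 1) (α := d - a) (by rw [hfr]; exact hd)
      (by rw [hfr]; linarith) (Filter.Eventually.of_forall fun z => ?_) ?_
    · rw [Real.norm_of_nonneg (by positivity), one_mul, neg_sub]
    · exact (measurable_norm.pow_const _).aestronglyMeasurable
  obtain ⟨R, hR⟩ := hS.subset_closedBall 0
  exact (hli.integrableOn_isCompact (isCompact_closedBall 0 R)).mono_set hR

theorem riesz_integral_closedBall (d : ℕ) (a h : ℝ) (hh : 0 < h) :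
    ∫ z in Metric.closedBall (0 : EuclideanSpace ℝ (Fin d)) h, ‖z‖ ^ (a - d) =
      (∫ z in Metric.closedBall (0 : EuclideanSpace ℝ (Fin d)) 1, ‖z‖ ^ (a - d)) * h ^ a := by
  have e := Measure.setIntegral_comp_smul_of_pos (volume : Measure (EuclideanSpace ℝ (Fin d)))
    (fun z => ‖z‖ ^ (a - d)) (Metric.closedBall 0 1) hh
  rw [smul_unitClosedBall_of_nonneg hh.le] at e
  have e2 : ∀ z : EuclideanSpace ℝ (Fin d), ‖h • z‖ ^ (a - d) = h ^ (a - d) * ‖z‖ ^ (a - d) :=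
    fun z => by
      rw [norm_smul, Real.norm_of_nonneg hh.le, Real.mul_rpow hh.le (norm_nonneg _)]
  simp only [e2] at e
  rw [integral_const_mul] at e
  have hfr : Module.finrank ℝ (EuclideanSpace ℝ (Fin d)) = d := by simp
  rw [hfr, smul_eq_mul, eq_inv_mul_iff_mul_eq₀ (by positivity), ← mul_assoc,
    ← Real.rpow_natCast, ← Real.rpow_add hh, add_sub_cancel] at e
  rw [← e, mul_comm]

theorem double_integral_bound (d : ℕ) (hd : 1 ≤ d) (p s : ℝ) (hp : 1 ≤ p) (hs1 : s < 1)
    (T : Set (EuclideanSpace ℝ (Fin d))) (hT : IsCompact T) (hh : 0 < Metric.diam T)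
    (v : EuclideanSpace ℝ (Fin d) → ℝ) (M : ℝ) (hM : 0 ≤ M)
    (hv : ∀ x ∈ T, ∀ y ∈ T, |v x - v y| ≤ M * ‖x - y‖) :
    ∫ x in T, ∫ y in T, |v x - v y| ^ p / ‖x - y‖ ^ ((d : ℝ) + s * p) ≤
      M ^ p * ((∫ z in Metric.closedBall (0 : EuclideanSpace ℝ (Fin d)) 1,
        ‖z‖ ^ (p * (1 - s) - d)) * Metric.diam T ^ (p * (1 - s))) *
        (Metric.diam T ^ d * volume.real (Metric.ball (0 : EuclideanSpace ℝ (Fin d)) 1)) := by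
  set h := Metric.diam T with hdef
  set a := p * (1 - s) with hadef
  have ha : 0 < a := mul_pos (by linarith) (by linarith)
  have hpt : ∀ x ∈ T, ∀ y ∈ T, |v x - v y| ^ p / ‖x - y‖ ^ ((d : ℝ) + s * p) ≤
      M ^ p * ‖y - x‖ ^ (a - d) := by
    intro x hx y hy
    rw [norm_sub_rev y x]
    rcases (norm_nonneg (x - y)).eq_or_lt with h0 | h0
    · have : x = y := by rwa [eq_comm, norm_eq_zero, sub_eq_zero] at h0
      subst this
      rw [sub_self, abs_zero, Real.zero_rpow (by linarith), zero_div]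
      positivity
    · rw [div_le_iff₀ (by positivity), mul_assoc, ← Real.rpow_add h0]
      have : a - d + (d + s * p) = p := by rw [hadef]; ring
      rw [this, ← Real.mul_rpow hM h0.le]
      exact Real.rpow_le_rpow (abs_nonneg _) (hv x hx y hy) (by linarith)
  set J := ∫ z in Metric.closedBall (0 : EuclideanSpace ℝ (Fin d)) 1, ‖z‖ ^ (a - d) with hJ
  have hJ0 : 0 ≤ J := integral_nonneg fun z => by positivity
  have hinner : ∀ x ∈ T, ∫ y in T, |v x - v y| ^ p / ‖x - y‖ ^ ((d : ℝ) + s * p) ≤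
      M ^ p * (J * h ^ a) := by
    intro x hx
    have hmp : MeasurePreserving (fun y : EuclideanSpace ℝ (Fin d) => y - x) volume volume :=
      measurePreserving_sub_right volume x
    have hme : MeasurableEmbedding (fun y : EuclideanSpace ℝ (Fin d) => y - x) :=
      (Homeomorph.subRight x).measurableEmbedding
    have hpre : (fun y : EuclideanSpace ℝ (Fin d) => y - x) ⁻¹' Metric.closedBall 0 h =
        Metric.closedBall x h := by
      ext y; simp [dist_eq_norm]
    have hsub : T ⊆ Metric.closedBall x h := fun y hy =>
      Metric.dist_le_diam_of_mem hT.isBounded hy hx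
    have hint : IntegrableOn (fun y => ‖y - x‖ ^ (a - d)) (Metric.closedBall x h) := by
      rw [← hpre]
      exact (hmp.integrableOn_comp_preimage hme (f := fun z => ‖z‖ ^ (a - d))).2
        (riesz_integrableOn d hd a ha _ Metric.isBounded_closedBall)
    calc ∫ y in T, |v x - v y| ^ p / ‖x - y‖ ^ ((d : ℝ) + s * p)
        ≤ ∫ y in T, M ^ p * ‖y - x‖ ^ (a - d) := by
          refine integral_mono_of_nonneg (Filter.Eventually.of_forall fun y => by positivity)
            ((hint.mono_set hsub).const_mul _) ?_
          exact (ae_restrict_iff' hT.measurableSet).2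
            (Filter.Eventually.of_forall fun y hy => hpt x hx y hy)
      _ = M ^ p * ∫ y in T, ‖y - x‖ ^ (a - d) := integral_const_mul _ _
      _ ≤ M ^ p * ∫ y in Metric.closedBall x h, ‖y - x‖ ^ (a - d) := by
          refine mul_le_mul_of_nonneg_left ?_ (by positivity)
          exact setIntegral_mono_set hint (Filter.Eventually.of_forall fun y => by positivity)
            (Filter.Eventually.of_forall hsub)
      _ = M ^ p * (J * h ^ a) := by
          rw [← hpre, hmp.setIntegral_preimage_emb hme (fun z => ‖z‖ ^ (a - d)),
            riesz_integral_closedBall d a h hh]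
  have hvol : volume.real T ≤ h ^ d * volume.real (Metric.ball (0 : EuclideanSpace ℝ (Fin d)) 1) := by
    obtain ⟨x, hx⟩ : T.Nonempty := by
      rw [Set.nonempty_iff_ne_empty]
      rintro rfl
      simp at hdef
      linarith
    have hsub : T ⊆ Metric.closedBall x h := fun y hy =>
      Metric.dist_le_diam_of_mem hT.isBounded hy hx
    have := Measure.addHaar_real_closedBall
      (volume : Measure (EuclideanSpace ℝ (Fin d))) x hh.le
    rw [finrank_euclideanSpace_fin] at this
    rw [← this]
    exact measureReal_mono hsub (isCompact_closedBall x h).measure_ne_top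
  calc _ ≤ ∫ x in T, M ^ p * (J * h ^ a) := by
        refine integral_mono_of_nonneg
          (Filter.Eventually.of_forall fun x => integral_nonneg fun y => by positivity)
          (integrableOn_const hT.measure_ne_top) ?_
        exact (ae_restrict_iff' hT.measurableSet).2 (Filter.Eventually.of_forall hinner)
    _ = M ^ p * (J * h ^ a) * volume.real T := by
        rw [setIntegral_const, smul_eq_mul, mul_comm]
    _ ≤ _ := by gcongr

theorem gagliardo_bound_of_lipschitz (d : ℕ) (hd : 1 ≤ d) (p s : ℝ) (hp : 1 ≤ p) (hs1 : s < 1)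
    (K : ℝ) (hK : 0 ≤ K) :
    ∃ C > 0, ∀ T : Set (EuclideanSpace ℝ (Fin d)), IsCompact T → 0 < Metric.diam T →
      ∀ v : EuclideanSpace ℝ (Fin d) → ℝ,
        (∀ x ∈ T, ∀ y ∈ T, |v x - v y| ≤ K / Metric.diam T * ‖x - y‖) →
        gagliardoSeminorm d s p T v ≤ C * Metric.diam T ^ ((d : ℝ) / p - s) := by
  set J := ∫ z in Metric.closedBall (0 : EuclideanSpace ℝ (Fin d)) 1, ‖z‖ ^ (p * (1 - s) - d)
    with hJ
  have hJ0 : 0 ≤ J := integral_nonneg fun z => by positivity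
  set κ := volume.real (Metric.ball (0 : EuclideanSpace ℝ (Fin d)) 1) with hκ
  have hκ0 : 0 ≤ κ := measureReal_nonneg
  have hp0 : 0 < p := by linarith
  refine ⟨(K ^ p * J * κ + 1) ^ (1 / p), by positivity, fun T hT hh v hv => ?_⟩
  set h := Metric.diam T with hdef
  have hb := double_integral_bound d hd p s hp hs1 T hT hh v (K / h) (by positivity) hv
  have hexp : h ^ (-p) * h ^ (p * (1 - s)) * h ^ d = h ^ ((d : ℝ) - s * p) := by
    rw [← Real.rpow_natCast, ← Real.rpow_add hh, ← Real.rpow_add hh]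
    congr 1
    ring
  have hb2 : ∫ x in T, ∫ y in T, |v x - v y| ^ p / ‖x - y‖ ^ ((d : ℝ) + s * p) ≤
      (K ^ p * J * κ + 1) * h ^ ((d : ℝ) - s * p) := by
    refine hb.trans ?_
    rw [Real.div_rpow hK hh.le, div_eq_mul_inv, ← Real.rpow_neg hh.le]
    calc _ = K ^ p * J * κ * (h ^ (-p) * h ^ (p * (1 - s)) * h ^ d) := by ring
      _ = K ^ p * J * κ * h ^ ((d : ℝ) - s * p) := by rw [hexp]
      _ ≤ _ := by gcongr; linarith
  have hnn : 0 ≤ ∫ x in T, ∫ y in T, |v x - v y| ^ p / ‖x - y‖ ^ ((d : ℝ) + s * p) :=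
    integral_nonneg fun x => integral_nonneg fun y => by positivity
  unfold gagliardoSeminorm
  refine (Real.rpow_le_rpow hnn hb2 (by positivity)).trans (le_of_eq ?_)
  rw [Real.mul_rpow (by positivity) (by positivity), ← Real.rpow_mul hh.le]
  congr 2
  field_simp

/-! ### Coordinates on a shape-regular simplex -/

/-- Barycentric coordinates of a point of the simplex, the one of the vertex `x 0` being
omitted. -/
theorem exists_coords_of_mem_simplex (d : ℕ) (x : Fin (d + 1) → EuclideanSpace ℝ (Fin d))
    (w : EuclideanSpace ℝ (Fin d)) (hw : w ∈ convexHull ℝ (Set.range x)) :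
    ∃ u : Fin d → ℝ, (∀ i, 0 ≤ u i) ∧ ∑ i, u i ≤ 1 ∧
      w = x 0 + ∑ i, u i • (x i.succ - x 0) := by
  have hsub : convexHull ℝ (Set.range x) ⊆ {w | ∃ u : Fin d → ℝ, (∀ i, 0 ≤ u i) ∧ ∑ i, u i ≤ 1 ∧
      w = x 0 + ∑ i, u i • (x i.succ - x 0)} := by
    refine convexHull_min ?_ ?_
    · rintro _ ⟨k, rfl⟩
      refine Fin.cases ?_ (fun k => ?_) k
      · exact ⟨0, by simp, by simp, by simp⟩
      · refine ⟨Pi.single k 1, fun i => ?_, by simp, ?_⟩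
        · by_cases h : i = k
          · subst h; simp
          · simp [h]
        · rw [Finset.sum_eq_single k]
          · simp
          · intro b _ hb; simp [hb]
          · simp
    · rintro _ ⟨u, hu, hu1, rfl⟩ _ ⟨u', hu', hu1', rfl⟩ a b ha hb hab
      refine ⟨a • u + b • u', fun i => ?_, ?_, ?_⟩
      · have := hu i; have := hu' i
        simp only [Pi.add_apply, Pi.smul_apply, smul_eq_mul]
        positivity
      · simp only [Pi.add_apply, Pi.smul_apply, smul_eq_mul, Finset.sum_add_distrib,
          ← Finset.mul_sum]
        nlinarith
      · simp only [Pi.add_apply, Pi.smul_apply, smul_eq_mul, add_smul, Finset.sum_add_distrib,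
          mul_smul, ← Finset.smul_sum, smul_add]
        have : x 0 = a • x 0 + b • x 0 := by rw [← add_smul, hab, one_smul]
        calc _ = (a • x 0 + b • x 0) + (a • ∑ i, u i • (x i.succ - x 0)
              + b • ∑ i, u' i • (x i.succ - x 0)) := by abel
          _ = _ := by rw [← this]
  exact hsub hw

/-- The matrix whose columns are the edge vectors `x (i + 1) - x 0` of the simplex. -/
noncomputable def edgeMatrix (d : ℕ) (x : Fin (d + 1) → EuclideanSpace ℝ (Fin d)) :
    Matrix (Fin d) (Fin d) ℝ := Matrix.of fun k i => (x i.succ - x 0) k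

/-- The simplex lies in a translate of the image of the unit ball under the edge matrix. -/
theorem volume_simplex_le (d : ℕ) (x : Fin (d + 1) → EuclideanSpace ℝ (Fin d)) :
    (volume (convexHull ℝ (Set.range x))).toReal ≤
      |(edgeMatrix d x).det| *
        volume.real (Metric.closedBall (0 : EuclideanSpace ℝ (Fin d)) 1) := by
  set A := Matrix.toLpLin 2 2 (edgeMatrix d x) with hA
  have hsub : convexHull ℝ (Set.range x) ⊆
      (fun y => x 0 + y) '' (A '' Metric.closedBall (0 : EuclideanSpace ℝ (Fin d)) 1) := by
    intro w hw
    obtain ⟨u, hu, hu1, rfl⟩ := exists_coords_of_mem_simplex d x w hw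
    refine ⟨_, ⟨WithLp.toLp 2 u, ?_, rfl⟩, ?_⟩
    · rw [mem_closedBall_zero_iff, EuclideanSpace.norm_eq, Real.sqrt_le_one]
      refine le_trans (Finset.sum_le_sum fun i _ => ?_) hu1
      have h1 : u i ≤ 1 := (Finset.single_le_sum (f := u) (fun i _ => hu i)
        (Finset.mem_univ i)).trans hu1
      rw [Real.norm_of_nonneg (hu i)]
      nlinarith [hu i]
    · congr 1
      ext k
      simp [hA, edgeMatrix, Matrix.mulVec, dotProduct, mul_comm]
  have h1 : volume (convexHull ℝ (Set.range x)) ≤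
      ENNReal.ofReal |(edgeMatrix d x).det| *
        volume (Metric.closedBall (0 : EuclideanSpace ℝ (Fin d)) 1) := by
    refine (measure_mono hsub).trans (le_of_eq ?_)
    rw [Set.image_add_left, measure_preimage_add, Measure.addHaar_image_linearMap, hA,
      LinearMap.det_toLpLin]
  have hfin : volume (Metric.closedBall (0 : EuclideanSpace ℝ (Fin d)) 1) ≠ ⊤ :=
    (isCompact_closedBall _ _).measure_ne_top
  have := ENNReal.toReal_mono (ENNReal.mul_ne_top ENNReal.ofReal_ne_top hfin) h1
  rwa [ENNReal.toReal_mul, ENNReal.toReal_ofReal (abs_nonneg _)] at this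

/-- Quantitative injectivity of a matrix with entries bounded by `1`, from `adj N * N = det N`
and the Leibniz bound `d!` for the entries of the adjugate. -/
theorem abs_le_of_mulVec (d : ℕ) (N : Matrix (Fin d) (Fin d) ℝ) (hN : ∀ i j, |N i j| ≤ 1)
    (u : Fin d → ℝ) (i : Fin d) :
    |N.det| * |u i| ≤ d.factorial * ∑ j, |N.mulVec u j| := by
  have hadj : ∀ i j, |N.adjugate i j| ≤ d.factorial := by
    intro i j
    rw [Matrix.adjugate_apply]
    have := Matrix.det_le (A := N.updateRow j (Pi.single i 1)) (abv := AbsoluteValue.abs)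
      (x := (1 : ℝ)) ?_
    · simpa using this
    · intro k l
      rw [Matrix.updateRow_apply]
      split_ifs with hk
      · by_cases hl : l = i
        · subst hl; simp
        · simp [hl]
      · exact hN k l
  have e : N.adjugate.mulVec (N.mulVec u) = N.det • u := by
    rw [Matrix.mulVec_mulVec, Matrix.adjugate_mul, Matrix.smul_mulVec, Matrix.one_mulVec]
  have e2 : N.det * u i = ∑ j, N.adjugate i j * N.mulVec u j := by
    have := congrFun e i
    rw [Pi.smul_apply, smul_eq_mul] at this
    rw [← this]
    rfl
  rw [← abs_mul, e2, Finset.mul_sum]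
  refine (Finset.abs_sum_le_sum_abs _ _).trans (Finset.sum_le_sum fun j _ => ?_)
  rw [abs_mul]
  exact mul_le_mul_of_nonneg_right (hadj i j) (abs_nonneg _)

theorem volume_simplex_pos (d : ℕ) (x : Fin (d + 1) → EuclideanSpace ℝ (Fin d))
    (hx : AffineIndependent ℝ x) : 0 < (volume (convexHull ℝ (Set.range x))).toReal := by
  have hcomp : IsCompact (convexHull ℝ (Set.range x)) := (Set.finite_range x).isCompact_convexHull ℝ
  refine ENNReal.toReal_pos ?_ hcomp.measure_ne_top
  have htop : affineSpan ℝ (Set.range x) = ⊤ :=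
    hx.affineSpan_eq_top_iff_card_eq_finrank_add_one.2 (by simp)
  have hne := interior_convexHull_nonempty_iff_affineSpan_eq_top.2 htop
  exact (Measure.measure_pos_of_nonempty_interior _ hne).ne'

theorem diam_simplex_pos (d : ℕ) (hd : 1 ≤ d) (x : Fin (d + 1) → EuclideanSpace ℝ (Fin d))
    (hx : AffineIndependent ℝ x) : 0 < Metric.diam (convexHull ℝ (Set.range x)) := by
  have hcomp : IsCompact (convexHull ℝ (Set.range x)) := (Set.finite_range x).isCompact_convexHull ℝ
  have hne : x 0 ≠ x (Fin.last d) := fun h => by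
    have := congrArg Fin.val (hx.injective h)
    simp at this
    omega
  exact (dist_pos.2 hne).trans_le (Metric.dist_le_diam_of_mem hcomp.isBounded
    (subset_convexHull ℝ _ ⟨0, rfl⟩) (subset_convexHull ℝ _ ⟨_, rfl⟩))

/-- The linear map from edge coordinates `u` to vectors has inverse of size `O(1 / h)` on a
simplex of diameter `h` with shape measure at most `μ₀`. -/
theorem coords_lipschitz (d : ℕ) (hd : 1 ≤ d) (μ₀ : ℝ)
    (x : Fin (d + 1) → EuclideanSpace ℝ (Fin d)) (hx : AffineIndependent ℝ x)
    (hμ : Metric.diam (convexHull ℝ (Set.range x)) ^ d /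
            (volume (convexHull ℝ (Set.range x))).toReal ≤ μ₀)
    (u : Fin d → ℝ) (i : Fin d) :
    |u i| ≤ μ₀ * volume.real (Metric.closedBall (0 : EuclideanSpace ℝ (Fin d)) 1) *
      (d.factorial * d) / Metric.diam (convexHull ℝ (Set.range x)) *
        ‖∑ i, u i • (x i.succ - x 0)‖ := by
  have hV := volume_simplex_pos d x hx
  have hh := diam_simplex_pos d hd x hx
  have hVle := volume_simplex_le d x
  have hcomp : IsCompact (convexHull ℝ (Set.range x)) := (Set.finite_range x).isCompact_convexHull ℝ
  set V := (volume (convexHull ℝ (Set.range x))).toReal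
  set κ := volume.real (Metric.closedBall (0 : EuclideanSpace ℝ (Fin d)) 1)
  have hedge : ∀ i : Fin d, ‖x i.succ - x 0‖ ≤ Metric.diam (convexHull ℝ (Set.range x)) := by
    intro i
    rw [← dist_eq_norm]
    exact Metric.dist_le_diam_of_mem hcomp.isBounded
      (subset_convexHull ℝ _ ⟨_, rfl⟩) (subset_convexHull ℝ _ ⟨0, rfl⟩)
  set h := Metric.diam (convexHull ℝ (Set.range x))
  have hκ : 0 ≤ κ := measureReal_nonneg
  set N := h⁻¹ • edgeMatrix d x with hNdef
  have hN : ∀ i j, |N i j| ≤ 1 := by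
    intro k j
    rw [hNdef, Matrix.smul_apply, smul_eq_mul, abs_mul, abs_inv, abs_of_pos hh, inv_mul_le_one₀ hh]
    exact (PiLp.norm_apply_le (x j.succ - x 0) k).trans (hedge j)
  have hdet : |(edgeMatrix d x).det| = h ^ d * |N.det| := by
    rw [hNdef, Matrix.det_smul, Fintype.card_fin, abs_mul, abs_pow, abs_inv, abs_of_pos hh,
      inv_pow, mul_inv_cancel_left₀ (by positivity)]
  -- Shape regularity: `h ^ d ≤ μ₀ V ≤ μ₀ κ h ^ d |det N|`.
  have hone : 1 ≤ μ₀ * κ * |N.det| := by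
    rw [div_le_iff₀ hV] at hμ
    have hμ0 : 0 < μ₀ := by
      by_contra hc
      have : μ₀ * V ≤ 0 := mul_nonpos_of_nonpos_of_nonneg (not_lt.1 hc) hV.le
      have : 0 < h ^ d := by positivity
      linarith
    rw [hdet] at hVle
    have h1 : h ^ d * 1 ≤ h ^ d * (μ₀ * κ * |N.det|) := by
      calc h ^ d * 1 ≤ μ₀ * V := by linarith
        _ ≤ μ₀ * (h ^ d * |N.det| * κ) := by gcongr
        _ = _ := by ring
    exact le_of_mul_le_mul_left h1 (by positivity)
  have hμκ : 0 ≤ μ₀ * κ := by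
    by_contra hc
    have : μ₀ * κ * |N.det| ≤ 0 := mul_nonpos_of_nonpos_of_nonneg (not_le.1 hc).le (abs_nonneg _)
    linarith
  set W := ∑ i, u i • (x i.succ - x 0) with hW
  have hmul : ∀ j, N.mulVec u j = h⁻¹ * W j := by
    intro j
    rw [hNdef, Matrix.smul_mulVec, Pi.smul_apply, smul_eq_mul, hW]
    congr 1
    simp [edgeMatrix, Matrix.mulVec, dotProduct, mul_comm]
  have hsum : ∑ j, |N.mulVec u j| ≤ d * (h⁻¹ * ‖W‖) := by
    refine (Finset.sum_le_card_nsmul _ _ (h⁻¹ * ‖W‖) fun j _ => ?_).trans (by simp)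
    rw [hmul, abs_mul, abs_inv, abs_of_pos hh]
    exact mul_le_mul_of_nonneg_left (PiLp.norm_apply_le W j) (by positivity)
  calc |u i| ≤ (μ₀ * κ * |N.det|) * |u i| := le_mul_of_one_le_left (abs_nonneg _) hone
    _ = μ₀ * κ * (|N.det| * |u i|) := by ring
    _ ≤ μ₀ * κ * (d.factorial * (d * (h⁻¹ * ‖W‖))) := by
        refine mul_le_mul_of_nonneg_left ((abs_le_of_mulVec d N hN u i).trans ?_) hμκ
        gcongr
    _ = _ := by field_simp

/-! ### The Lipschitz estimate on the simplex -/

/-- A polynomial of degree at most `r` that is bounded by `1` at the Lagrange points of a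
shape-regular simplex is Lipschitz on it with constant `O(1 / h)`. Only the bound on the nodal
values matters, not that they are `0` or `1`. -/
theorem exists_lipschitz_on_simplex (d r : ℕ) (hd : 1 ≤ d) (hr : 1 ≤ r) (μ₀ : ℝ) (hμ₀ : 0 < μ₀) :
    ∃ K : ℝ, 0 ≤ K ∧ ∀ x : Fin (d + 1) → EuclideanSpace ℝ (Fin d), AffineIndependent ℝ x →
      Metric.diam (convexHull ℝ (Set.range x)) ^ d /
          (volume (convexHull ℝ (Set.range x))).toReal ≤ μ₀ →
      ∀ P : MvPolynomial (Fin d) ℝ, P.totalDegree ≤ r →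
        (∀ y ∈ lagrangePoints d r x, |MvPolynomial.eval (fun i => y i) P| ≤ 1) →
        ∀ w ∈ convexHull ℝ (Set.range x), ∀ w' ∈ convexHull ℝ (Set.range x),
          |MvPolynomial.eval (fun i => w i) P - MvPolynomial.eval (fun i => w' i) P| ≤
            K / Metric.diam (convexHull ℝ (Set.range x)) * ‖w - w'‖ := by
  obtain ⟨L, hL, hLip⟩ := exists_lipschitz_of_lattice_bound d r
  set κ := volume.real (Metric.closedBall (0 : EuclideanSpace ℝ (Fin d)) 1)
  have hκ : 0 ≤ κ := measureReal_nonneg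
  refine ⟨L * (d * (r * (μ₀ * κ * (d.factorial * d)))), by positivity, ?_⟩
  intro x hx hμ P hP hval w hw w' hw'
  have hr0 : (r : ℝ) ≠ 0 := by positivity
  -- `bind₁ f P` is `P` pulled back to the coordinates in which Lagrange points are integral.
  let f : Fin d → MvPolynomial (Fin d) ℝ := fun k =>
    MvPolynomial.C (x 0 k) +
      ∑ i, MvPolynomial.C ((r : ℝ)⁻¹ * (x i.succ - x 0) k) * MvPolynomial.X i
  have hf : ∀ k, (f k).totalDegree ≤ 1 := fun k => by
    refine (MvPolynomial.totalDegree_add _ _).trans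
      (max_le (by rw [MvPolynomial.totalDegree_C]; exact zero_le_one) ?_)
    refine MvPolynomial.totalDegree_finsetSum_le fun i _ => ?_
    refine (MvPolynomial.totalDegree_mul _ _).trans ?_
    rw [MvPolynomial.totalDegree_C, MvPolynomial.totalDegree_X]
  have heval : ∀ u : Fin d → ℝ, MvPolynomial.eval u (MvPolynomial.bind₁ f P) =
      MvPolynomial.eval
        (fun k => (x 0 + ∑ i, ((r : ℝ)⁻¹ * u i) • (x i.succ - x 0) :
          EuclideanSpace ℝ (Fin d)) k) P := by
    intro u
    rw [MvPolynomial.eval, MvPolynomial.eval₂Hom_bind₁]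
    congr 2
    ext k
    simp [f, mul_assoc, mul_comm]
  have hlat : ∀ m : Fin d → ℕ, ∑ i, m i ≤ r →
      |MvPolynomial.eval (fun i => (m i : ℝ)) (MvPolynomial.bind₁ f P)| ≤ 1 := by
    intro m hm
    rw [heval]
    refine hval _ ⟨Fin.cons (r - ∑ i, m i) m, ?_, ?_⟩
    · rw [Fin.sum_univ_succ]
      simp only [Fin.cons_zero, Fin.cons_succ]
      omega
    · rw [Fin.sum_univ_succ]
      simp only [Fin.cons_zero, Fin.cons_succ]
      rw [Nat.cast_sub hm]
      simp only [smul_sub, Finset.sum_sub_distrib, mul_smul, ← Finset.smul_sum,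
        ← Finset.sum_smul, sub_smul, smul_add, inv_smul_smul₀ hr0]
      push_cast
      abel
  obtain ⟨u, hu, hu1, rfl⟩ := exists_coords_of_mem_simplex d x w hw
  obtain ⟨u', hu', hu1', rfl⟩ := exists_coords_of_mem_simplex d x w' hw'
  have hle : ∀ u : Fin d → ℝ, (∀ i, 0 ≤ u i) → ∑ i, u i ≤ 1 → ∀ i, |r * u i| ≤ r := by
    intro u hu hu1 i
    have h1 : u i ≤ 1 := (Finset.single_le_sum (f := u) (fun i _ => hu i)
      (Finset.mem_univ i)).trans hu1
    rw [abs_of_nonneg (mul_nonneg (Nat.cast_nonneg r) (hu i))]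
    exact mul_le_of_le_one_right (Nat.cast_nonneg r) h1
  have hmain := hLip _ (totalDegree_bind_affine d r P hP f hf) hlat (fun i => r * u i)
    (fun i => r * u' i) (hle u hu hu1) (hle u' hu' hu1')
  rw [heval, heval] at hmain
  simp only [inv_mul_cancel_left₀ hr0] at hmain
  refine hmain.trans ?_
  have hdiff : (x 0 + ∑ i, u i • (x i.succ - x 0)) - (x 0 + ∑ i, u' i • (x i.succ - x 0)) =
      ∑ i, (u - u') i • (x i.succ - x 0) := by
    simp only [Pi.sub_apply, sub_smul, Finset.sum_sub_distrib]
    abel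
  rw [hdiff]
  set W := ∑ i, (u - u') i • (x i.succ - x 0) with hW
  set h := Metric.diam (convexHull ℝ (Set.range x))
  have hsum : ∑ i, |r * u i - r * u' i| ≤ d * (r * (μ₀ * κ * (d.factorial * d) / h * ‖W‖)) := by
    refine (Finset.sum_le_card_nsmul _ _ (r * (μ₀ * κ * (d.factorial * d) / h * ‖W‖))
      fun i _ => ?_).trans (by simp)
    rw [← mul_sub, abs_mul, Nat.abs_cast]
    exact mul_le_mul_of_nonneg_left (coords_lipschitz d hd μ₀ x hx hμ (u - u') i)
      (Nat.cast_nonneg r)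
  calc _ ≤ L * (d * (r * (μ₀ * κ * (d.factorial * d) / h * ‖W‖))) :=
        mul_le_mul_of_nonneg_left hsum hL
    _ = _ := by ring

/-- **Scaling of the Lagrange basis polynomials in Sobolev–Slobodeckij seminorms.**
For `d ≥ 1`, `r ≥ 1`, `p ∈ [1,∞)`, `s ∈ (0,1)` and `μ₀ > 0` there is `C > 0`,
depending only on `d, r, s, p, μ₀`, such that for every `d`-simplex
`T = conv{x₀,…,x_d} ⊆ ℝ^d` with shape measure `h_T^d / vol(T) ≤ μ₀` and every
Lagrange point `z ∈ 𝔏_r(T)`, the Lagrange basis polynomial `Φ^T_{r,z}`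
(the polynomial of degree ≤ r equal to `1` at `z` and `0` at the other Lagrange
points) satisfies `|Φ^T_{r,z}|_{W^{s,p}(T)} ≤ C · h_T^{d/p − s}`. -/
theorem lagrange_basis_seminorm_bound
    (d r : ℕ) (hd : 1 ≤ d) (hr : 1 ≤ r)
    (p s μ₀ : ℝ) (hp : 1 ≤ p) (hs0 : 0 < s) (hs1 : s < 1) (hμ₀ : 0 < μ₀) :
    ∃ C > 0,
      ∀ x : Fin (d + 1) → EuclideanSpace ℝ (Fin d),
        AffineIndependent ℝ x →
        Metric.diam (convexHull ℝ (Set.range x)) ^ d /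
            (volume (convexHull ℝ (Set.range x))).toReal ≤ μ₀ →
        ∀ z ∈ lagrangePoints d r x,
          ∀ P : MvPolynomial (Fin d) ℝ, P.totalDegree ≤ r →
            (∀ y ∈ lagrangePoints d r x,
              MvPolynomial.eval (fun i => y i) P = if y = z then 1 else 0) →
            gagliardoSeminorm d s p (convexHull ℝ (Set.range x))
                (fun w => MvPolynomial.eval (fun i => w i) P) ≤
              C * Metric.diam (convexHull ℝ (Set.range x)) ^ ((d : ℝ) / p - s) := by
  obtain ⟨K, hK, hLip⟩ := exists_lipschitz_on_simplex d r hd hr μ₀ hμ₀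
  obtain ⟨C, hC, hbound⟩ := gagliardo_bound_of_lipschitz d hd p s hp hs1 K hK
  refine ⟨C, hC, fun x hx hμ z _ P hP hval => ?_⟩
  refine hbound _ ((Set.finite_range x).isCompact_convexHull ℝ) (diam_simplex_pos d hd x hx) _ ?_
  refine hLip x hx hμ P hP fun y hy => ?_
  rw [hval y hy]
  split_ifs <;> simp
end

section
/- Let d ≥ 1, r ∈ ℕ, p ∈ (1,∞), and μ₀ > 0, and let p' satisfy 1/p + 1/p' = 1. Then there exists a constant C > 0, depending only on d, r, p and μ₀, such that for every d-dimensional simplex T ⊆ ℝ^d with shape measure μ(T) ≤ μ₀ and every Lagrange point x ∈ 𝔏_r(T), the dual basis polynomial Ψ^T_{r,x}, defined as the unique polynomial of total degree ≤ r satisfying ∫_T Ψ^T_{r,x}(y) q(y) dy = q(x) for all polynomials q of total degree ≤ r, satisfies ( ∫_T |Ψ^T_{r,x}|^{p'} dy )^{1/p'} ≤ C · h_T^{−d/p}, where h_T is the diameter of T. -/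
/-!
On the simplex `T` with volume `V`, polynomials `q` of degree at most `r` satisfy the inverse
estimate `sup_T |q|² ≤ (M / V) ∫_T q²` with `M` depending only on `d` and `r`
(`exists_sq_eval_le_simplex`). On a fixed reference simplex this is the equivalence of norms on a
finite-dimensional space (`exists_sq_eval_le_integral`), and it passes to `T` by the affine map
from the reference simplex, which preserves the degree bound (`exists_pullback`) and scales
integrals by the constant Jacobian.

Testing the defining property of `Ψ` with `q = Ψ` gives `∫_T Ψ² = Ψ(z) ≤ sup_T |Ψ|`, because
`z ∈ T`; hence `sup_T |Ψ| ≤ M / V`. Therefore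
`‖Ψ‖_{L^{p'}(T)} ≤ (M / V) V^{1/p'} = M V^{-1/p}`, and `V ≥ h_T^d / μ₀` finishes the proof.
-/

open MeasureTheory

theorem continuous_eval_euclidean {d : ℕ} (q : MvPolynomial (Fin d) ℝ) :
    Continuous fun y : EuclideanSpace ℝ (Fin d) => MvPolynomial.eval (fun i => y i) q := by
  have := MvPolynomial.continuous_eval q
  fun_prop

/-- Positive definiteness of the `L²(K)` form on polynomials: a polynomial vanishing almost
everywhere on `K` vanishes on the interior of `K`, hence everywhere by analyticity. -/
theorem eq_zero_of_integral_sq_eq_zero {d : ℕ} {K : Set (EuclideanSpace ℝ (Fin d))}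
    (hK : IsCompact K) (hInt : (interior K).Nonempty) (q : MvPolynomial (Fin d) ℝ)
    (h : ∫ y in K, MvPolynomial.eval (fun i => y i) q * MvPolynomial.eval (fun i => y i) q = 0) :
    q = 0 := by
  have hc := continuous_eval_euclidean q
  rw [setIntegral_eq_zero_iff_of_nonneg_ae (Filter.Eventually.of_forall
    fun y => mul_self_nonneg _) ((hc.mul hc).continuousOn.integrableOn_compact hK)] at h
  have h1 := ae_mono (Measure.restrict_mono_set volume (interior_subset (s := K))) h
  have h2 := Measure.eqOn_open_of_ae_eq h1 isOpen_interior (hc.mul hc).continuousOn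
    continuousOn_const
  obtain ⟨y₀, hy₀⟩ := hInt
  have han : AnalyticOnNhd ℝ
      (fun y : EuclideanSpace ℝ (Fin d) => MvPolynomial.eval (fun i => y i) q) Set.univ := by
    have := AnalyticOnNhd.eval_continuousLinearMap'
      (fun i => (EuclideanSpace.proj i : EuclideanSpace ℝ (Fin d) →L[ℝ] ℝ)) q
    simpa using this
  have h3 := han.eqOn_zero_of_preconnected_of_eventuallyEq_zero isPreconnected_univ
    (Set.mem_univ y₀) (by
      filter_upwards [isOpen_interior.mem_nhds hy₀] with y hy
      simpa using h2 hy)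
  refine MvPolynomial.funext fun v => ?_
  simpa using h3 (Set.mem_univ (WithLp.toLp 2 v))

/-- Linear functionals on a finite-dimensional space are bounded with respect to any inner
product. -/
theorem InnerProductSpace.Core.exists_abs_le {W : Type*} [AddCommGroup W] [Module ℝ W]
    [FiniteDimensional ℝ W] (core : InnerProductSpace.Core ℝ W) (f : W →ₗ[ℝ] ℝ) :
    ∃ M : ℝ, 0 ≤ M ∧ ∀ w, |f w| ≤ M * √(core.inner w w) := by
  let _ : NormedAddCommGroup W := core.toNormedAddCommGroup
  let _ : InnerProductSpace ℝ W := InnerProductSpace.ofCore core.toCore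
  refine ⟨‖LinearMap.toContinuousLinearMap f‖, ContinuousLinearMap.opNorm_nonneg _, fun w => ?_⟩
  exact (LinearMap.toContinuousLinearMap f).le_opNorm w

/-- Equivalence of the supremum and `L²` norms over `K` on polynomials of degree at most `r`:
coordinates in a fixed basis are controlled by the `L²(K)` norm, and each basis polynomial is
bounded on `K`. -/
theorem exists_sq_eval_le_integral {d : ℕ} (r : ℕ) {K : Set (EuclideanSpace ℝ (Fin d))}
    (hK : IsCompact K) (hInt : (interior K).Nonempty) :
    ∃ M > 0, ∀ q : MvPolynomial (Fin d) ℝ, q.totalDegree ≤ r → ∀ y ∈ K,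
      MvPolynomial.eval (fun i => y i) q ^ 2 ≤
        M * ∫ y in K, MvPolynomial.eval (fun i => y i) q * MvPolynomial.eval (fun i => y i) q := by
  let V := MvPolynomial.restrictTotalDegree (Fin d) ℝ r
  have hInt2 (p q : MvPolynomial (Fin d) ℝ) : IntegrableOn (fun y : EuclideanSpace ℝ (Fin d) =>
      MvPolynomial.eval (fun i => y i) p * MvPolynomial.eval (fun i => y i) q) K :=
    ((continuous_eval_euclidean p).mul
      (continuous_eval_euclidean q)).continuousOn.integrableOn_compact hK
  let core : InnerProductSpace.Core ℝ V :=
    { inner := fun p q => ∫ y in K, MvPolynomial.eval (fun i => y i) p.1 *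
        MvPolynomial.eval (fun i => y i) q.1
      conj_inner_symm := fun p q => by simp [mul_comm]
      re_inner_nonneg := fun p => by
        simpa using integral_nonneg fun y => mul_self_nonneg _
      add_left := fun p q s => by
        simp only [Submodule.coe_add, map_add, add_mul]
        exact integral_add (hInt2 _ _) (hInt2 _ _)
      smul_left := fun p q c => by
        simp [mul_assoc, integral_const_mul]
      definite := fun p hp => by
        exact Subtype.ext (eq_zero_of_integral_sq_eq_zero hK hInt p.1 hp) }
  let b := Module.finBasis ℝ V
  choose B hB using fun i => hK.exists_bound_of_continuousOn
    (continuous_eval_euclidean (b i).1).continuousOn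
  choose N hN0 hN using fun i => core.exists_abs_le (b.coord i)
  refine ⟨(∑ i, N i * |B i|) ^ 2 + 1, by positivity, fun q hq y hy => ?_⟩
  let p : V := ⟨q, (MvPolynomial.mem_restrictTotalDegree _ _ _).2 hq⟩
  set I := ∫ y in K, MvPolynomial.eval (fun i => y i) q * MvPolynomial.eval (fun i => y i) q
    with hI
  have hI0 : 0 ≤ I := integral_nonneg fun y => mul_self_nonneg _
  have hNp (i) : |b.coord i p| ≤ N i * √I := hN i p
  have h1 : |MvPolynomial.eval (fun i => y i) q| ≤ (∑ i, N i * |B i|) * √I := by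
    have h2 : q = ∑ i, (b.coord i p) • (b i).1 := by
      have h3 : V.subtype (∑ i, b.repr p i • b i) = q := congrArg V.subtype (b.sum_repr p)
      rw [map_sum] at h3
      exact h3.symm
    conv_lhs => rw [h2, map_sum]
    rw [Finset.sum_mul]
    refine (Finset.abs_sum_le_sum_abs _ _).trans (Finset.sum_le_sum fun i _ => ?_)
    rw [MvPolynomial.smul_eval, abs_mul]
    calc _ ≤ (N i * √I) * |B i| :=
          mul_le_mul (hNp i) ((hB i y hy).trans (le_abs_self _)) (abs_nonneg _)
            (mul_nonneg (hN0 i) (Real.sqrt_nonneg _))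
      _ = _ := by ring
  calc MvPolynomial.eval (fun i => y i) q ^ 2 = |MvPolynomial.eval (fun i => y i) q| ^ 2 :=
        (sq_abs _).symm
    _ ≤ ((∑ i, N i * |B i|) * √I) ^ 2 := by gcongr
    _ ≤ _ := by rw [mul_pow, Real.sq_sqrt hI0]; gcongr; linarith

/-- The pullback of a polynomial under the affine map `y ↦ a + A y` is a polynomial of no larger
total degree. -/
theorem exists_pullback {d : ℕ} (a : EuclideanSpace ℝ (Fin d))
    (A : EuclideanSpace ℝ (Fin d) →ₗ[ℝ] EuclideanSpace ℝ (Fin d)) (q : MvPolynomial (Fin d) ℝ) :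
    ∃ q' : MvPolynomial (Fin d) ℝ, q'.totalDegree ≤ q.totalDegree ∧
      ∀ y : EuclideanSpace ℝ (Fin d),
        MvPolynomial.eval (fun i => y i) q' = MvPolynomial.eval (fun i => (a + A y) i) q := by
  let L : Fin d → MvPolynomial (Fin d) ℝ := fun i =>
    MvPolynomial.C (a i) + ∑ j, MvPolynomial.C (A (EuclideanSpace.single j 1) i) * MvPolynomial.X j
  have hL (i : Fin d) : (L i).totalDegree ≤ 1 := by
    refine (MvPolynomial.totalDegree_add _ _).trans (max_le (by simp) ?_)
    refine MvPolynomial.totalDegree_finsetSum_le fun j _ => ?_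
    exact (MvPolynomial.totalDegree_mul _ _).trans (by simp)
  refine ⟨MvPolynomial.bind₁ L q, ?_, fun y => ?_⟩
  · conv_lhs => rw [q.as_sum, map_sum]
    refine MvPolynomial.totalDegree_finsetSum_le fun m hm => ?_
    rw [MvPolynomial.bind₁_monomial]
    refine (MvPolynomial.totalDegree_mul _ _).trans ?_
    rw [MvPolynomial.totalDegree_C, zero_add]
    refine (MvPolynomial.totalDegree_finsetProd _ _).trans
      (le_trans ?_ (MvPolynomial.le_totalDegree hm))
    refine Finset.sum_le_sum fun i _ => (MvPolynomial.totalDegree_pow _ _).trans ?_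
    simpa using Nat.mul_le_mul_left (m i) (hL i)
  · rw [← MvPolynomial.coe_aeval_eq_eval, RingHom.coe_coe, MvPolynomial.aeval_bind₁,
      ← MvPolynomial.coe_aeval_eq_eval, RingHom.coe_coe]
    congr 2
    funext i
    have hy : y = ∑ j, y j • EuclideanSpace.single j (1 : ℝ) := by
      simpa using ((EuclideanSpace.basisFun (Fin d) ℝ).sum_repr y).symm
    conv_rhs => rw [hy, map_sum]
    simp [L, mul_comm]

/-- The vertices `0, e₁, …, e_d` of the reference simplex in `ℝ^d`. -/
noncomputable def refVertices (d : ℕ) : Fin (d + 1) → EuclideanSpace ℝ (Fin d) :=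
  Fin.cons 0 fun i => EuclideanSpace.single i 1

theorem interior_refSimplex_nonempty (d : ℕ) :
    (interior (convexHull ℝ (Set.range (refVertices d)))).Nonempty := by
  rw [interior_convexHull_nonempty_iff_affineSpan_eq_top, refVertices, Fin.range_cons,
    ← SetLike.coe_set_eq, affineSpan_insert_zero]
  have h := (EuclideanSpace.basisFun (Fin d) ℝ).toBasis.span_eq
  have h2 : ⇑(EuclideanSpace.basisFun (Fin d) ℝ).toBasis =
      fun i => EuclideanSpace.single i (1 : ℝ) := by
    funext i; simp
  rw [h2] at h
  rw [h]; rfl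

/-- Every simplex, degenerate or not, is an affine image of the reference simplex. -/
theorem exists_image_refSimplex {d : ℕ} (x : Fin (d + 1) → EuclideanSpace ℝ (Fin d)) :
    ∃ A : EuclideanSpace ℝ (Fin d) →ₗ[ℝ] EuclideanSpace ℝ (Fin d),
      (fun y => x 0 + A y) '' convexHull ℝ (Set.range (refVertices d)) =
        convexHull ℝ (Set.range x) := by
  let A := (EuclideanSpace.basisFun (Fin d) ℝ).toBasis.constr ℝ fun i => x i.succ - x 0
  refine ⟨A, ?_⟩
  let F : EuclideanSpace ℝ (Fin d) →ᵃ[ℝ] EuclideanSpace ℝ (Fin d) :=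
    AffineMap.const ℝ _ (x 0) + A.toAffineMap
  have hF : (fun y => x 0 + A y) = F := by funext y; simp [F]
  rw [hF, AffineMap.image_convexHull, ← Set.range_comp]
  congr 2
  funext i
  rw [← hF]
  refine Fin.cases ?_ (fun j => ?_) i
  · simp [refVertices]
  · simp [refVertices, A]

/-- The inverse estimate `sup_T |q|² ≤ (M / vol T) ∫_T q²`, with `M` independent of the simplex
`T`, together with positivity of the volume of `T`. -/
theorem exists_sq_eval_le_simplex (d r : ℕ) :
    ∃ M > 0, ∀ x : Fin (d + 1) → EuclideanSpace ℝ (Fin d), AffineIndependent ℝ x →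
      0 < volume.real (convexHull ℝ (Set.range x)) ∧
      ∀ q : MvPolynomial (Fin d) ℝ, q.totalDegree ≤ r → ∀ y ∈ convexHull ℝ (Set.range x),
        MvPolynomial.eval (fun i => y i) q ^ 2 ≤
          M / volume.real (convexHull ℝ (Set.range x)) *
            ∫ y in convexHull ℝ (Set.range x),
              MvPolynomial.eval (fun i => y i) q * MvPolynomial.eval (fun i => y i) q := by
  set S := convexHull ℝ (Set.range (refVertices d)) with hS
  have hSc : IsCompact S := (Set.finite_range _).isCompact_convexHull ℝ
  obtain ⟨M, hM, hMq⟩ := exists_sq_eval_le_integral r hSc (interior_refSimplex_nonempty d)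
  have hSpos : 0 < volume.real S :=
    ENNReal.toReal_pos ((Measure.measure_pos_of_nonempty_interior _
      (interior_refSimplex_nonempty d)).ne') hSc.measure_lt_top.ne
  refine ⟨M * volume.real S, by positivity, fun x hx => ?_⟩
  obtain ⟨A, hA⟩ := exists_image_refSimplex x
  rw [← hS] at hA
  set T := convexHull ℝ (Set.range x) with hT
  have hTc : IsCompact T := (Set.finite_range _).isCompact_convexHull ℝ
  have hTint : (interior T).Nonempty := by
    rw [hT, interior_convexHull_nonempty_iff_affineSpan_eq_top,
      hx.affineSpan_eq_top_iff_card_eq_finrank_add_one]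
    simp
  have hTpos : 0 < volume.real T :=
    ENNReal.toReal_pos ((Measure.measure_pos_of_nonempty_interior _ hTint).ne') hTc.measure_lt_top.ne
  have hvol : volume.real T = |LinearMap.det A| * volume.real S := by
    have h1 : T = (fun y => x 0 + y) '' (A '' S) := by rw [← hA, Set.image_image]
    rw [Measure.real, h1, Set.image_add_left, measure_preimage_add,
      Measure.addHaar_image_linearMap, ENNReal.toReal_mul, ENNReal.toReal_ofReal (abs_nonneg _),
      Measure.real]
  have hdet : 0 < |LinearMap.det A| := by
    refine (abs_nonneg _).lt_of_ne fun h => ?_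
    rw [hvol, ← h, zero_mul] at hTpos
    exact lt_irrefl _ hTpos
  have hinj : Function.Injective A :=
    (A.equivOfDetNeZero (abs_pos.1 hdet)).injective
  refine ⟨hTpos, fun q hq y hy => ?_⟩
  obtain ⟨q', hq', hev⟩ := exists_pullback (x 0) A q
  have hcv : ∫ y in T, MvPolynomial.eval (fun i => y i) q * MvPolynomial.eval (fun i => y i) q =
      |LinearMap.det A| *
        ∫ y in S, MvPolynomial.eval (fun i => y i) q' * MvPolynomial.eval (fun i => y i) q' := by
    rw [← hA, integral_image_eq_integral_abs_det_fderiv_smul volume (f := fun y => x 0 + A y) hSc.measurableSet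
      (f' := fun _ => LinearMap.toContinuousLinearMap A)
      (fun y _ => ((LinearMap.toContinuousLinearMap A).hasFDerivAt.const_add
        (x 0)).hasFDerivWithinAt)
      (fun u _ v _ h => hinj (add_left_cancel h)), ← integral_const_mul]
    simp only [hev, smul_eq_mul, LinearMap.det_toContinuousLinearMap]
  rw [← hA] at hy
  obtain ⟨w, hw, rfl⟩ := hy
  have h := hMq q' (hq'.trans hq) w hw
  rw [hev] at h
  refine h.trans_eq ?_
  rw [hcv, hvol]
  field_simp

theorem lagrangePoints_subset {d r : ℕ} (hr : 1 ≤ r)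
    (x : Fin (d + 1) → EuclideanSpace ℝ (Fin d)) :
    lagrangePoints d r x ⊆ convexHull ℝ (Set.range x) := by
  rintro _ ⟨α, hα, rfl⟩
  have hr0 : (0 : ℝ) < r := by exact_mod_cast hr
  rw [Finset.smul_sum]
  simp only [smul_smul]
  refine (convex_convexHull ℝ _).sum_mem (fun i _ => by positivity) ?_
    fun i _ => subset_convexHull ℝ _ (Set.mem_range_self i)
  rw [← Finset.mul_sum, ← Nat.cast_sum, hα, inv_mul_cancel₀ hr0.ne']

/-- **Scaling of the dual basis polynomials in the dual Lebesgue norm.**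
For `d ≥ 1`, `r ≥ 1`, `p ∈ (1,∞)`, `μ₀ > 0` and `p'` the conjugate exponent
(`1/p + 1/p' = 1`), there is `C > 0`, depending only on `d, r, p, μ₀`, such that
for every `d`-simplex `T = conv{x₀,…,x_d} ⊆ ℝ^d` with shape measure
`h_T^d / vol(T) ≤ μ₀`, every Lagrange point `z ∈ 𝔏_r(T)`, and every polynomial
`Ψ` of total degree ≤ r satisfying `∫_T Ψ q = q(z)` for all polynomials `q` of
total degree ≤ r, one has `( ∫_T |Ψ|^{p'} )^{1/p'} ≤ C · h_T^{−d/p}`. -/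
theorem dual_basis_polynomial_bound
    (d r : ℕ) (hd : 1 ≤ d) (hr : 1 ≤ r)
    (p p' μ₀ : ℝ) (hp : 1 < p) (hμ₀ : 0 < μ₀)
    (hconj : 1 / p + 1 / p' = 1) :
    ∃ C > 0,
      ∀ x : Fin (d + 1) → EuclideanSpace ℝ (Fin d),
        AffineIndependent ℝ x →
        Metric.diam (convexHull ℝ (Set.range x)) ^ d /
            (volume (convexHull ℝ (Set.range x))).toReal ≤ μ₀ →
        ∀ z ∈ lagrangePoints d r x,
          ∀ Ψ : MvPolynomial (Fin d) ℝ, Ψ.totalDegree ≤ r →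
            (∀ q : MvPolynomial (Fin d) ℝ, q.totalDegree ≤ r →
              ∫ y in convexHull ℝ (Set.range x),
                  MvPolynomial.eval (fun i => y i) Ψ * MvPolynomial.eval (fun i => y i) q =
                MvPolynomial.eval (fun i => z i) q) →
            (∫ y in convexHull ℝ (Set.range x),
                |MvPolynomial.eval (fun i => y i) Ψ| ^ p') ^ (1 / p') ≤
              C * Metric.diam (convexHull ℝ (Set.range x)) ^ (-(d : ℝ) / p) := by
  obtain ⟨M, hM, hMx⟩ := exists_sq_eval_le_simplex d r
  have hp0 : 0 < p := by linarith
  have hp' : 0 < 1 / p' := by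
    have : 1 / p < 1 := by rw [div_lt_one hp0]; exact hp
    linarith
  have hp'0 : 0 < p' := one_div_pos.1 hp'
  refine ⟨M * μ₀ ^ (1 / p), by positivity, fun x hx hμ z hz Ψ hΨ hrep => ?_⟩
  obtain ⟨hV, hq⟩ := hMx x hx
  have hzT := lagrangePoints_subset hr x hz
  set T := convexHull ℝ (Set.range x) with hT
  have hTc : IsCompact T := (Set.finite_range _).isCompact_convexHull ℝ
  change Metric.diam T ^ d / volume.real T ≤ μ₀ at hμ
  set V := volume.real T
  set h := Metric.diam T
  have hh : 0 < h := by
    have h01 : x 0 ≠ x 1 := hx.injective.ne (by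
      obtain ⟨e, rfl⟩ : ∃ e, d = e + 1 := ⟨d - 1, by omega⟩
      simp)
    exact (dist_pos.2 h01).trans_le (Metric.dist_le_diam_of_mem hTc.isBounded
      (subset_convexHull ℝ _ (Set.mem_range_self 0))
      (subset_convexHull ℝ _ (Set.mem_range_self 1)))
  have hsup : ∀ y ∈ T, |MvPolynomial.eval (fun i => y i) Ψ| ≤ M / V := by
    -- The inverse estimate for `Ψ`, whose integral `∫_T Ψ²` equals `Ψ(z)` by testing with `q = Ψ`.
    have hb : ∀ y ∈ T, MvPolynomial.eval (fun i => y i) Ψ ^ 2 ≤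
        M / V * MvPolynomial.eval (fun i => z i) Ψ := fun y hy => by
      rw [← hrep Ψ hΨ]; exact hq Ψ hΨ y hy
    have hMV : 0 < M / V := by positivity
    have hz2 := hb z hzT
    have hz1 : MvPolynomial.eval (fun i => z i) Ψ ≤ M / V := by
      by_contra! hlt
      nlinarith
    intro y hy
    refine abs_le_of_sq_le_sq ((hb y hy).trans ?_) hMV.le
    rw [sq]
    gcongr
  have hInt : ∫ y in T, |MvPolynomial.eval (fun i => y i) Ψ| ^ p' ≤ (M / V) ^ p' * V := by
    have h1 : ‖∫ y in T, |MvPolynomial.eval (fun i => y i) Ψ| ^ p'‖ ≤ (M / V) ^ p' * V := by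
      refine norm_setIntegral_le_of_norm_le_const hTc.measure_lt_top fun y hy => ?_
      rw [Real.norm_of_nonneg (by positivity)]
      exact Real.rpow_le_rpow (abs_nonneg _) (hsup y hy) hp'0.le
    exact (le_abs_self _).trans h1
  have hVh : h ^ d / μ₀ ≤ V := by
    rw [div_le_iff₀ hV] at hμ
    rw [div_le_iff₀ hμ₀]; linarith
  calc _ ≤ ((M / V) ^ p' * V) ^ (1 / p') :=
        Real.rpow_le_rpow (integral_nonneg fun y => by positivity) hInt hp'.le
    _ = M * V ^ (-(1 / p)) := by
        rw [Real.mul_rpow (by positivity) hV.le, ← Real.rpow_mul (by positivity),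
          mul_one_div_cancel hp'0.ne', Real.rpow_one, div_mul_eq_mul_div, mul_div_assoc]
        congr 1
        rw [show -(1 / p) = 1 / p' - 1 by linarith, Real.rpow_sub_one hV.ne']
    _ ≤ M * (h ^ d / μ₀) ^ (-(1 / p)) := by
        gcongr M * ?_
        exact Real.rpow_le_rpow_of_nonpos (by positivity) hVh
          (by rw [neg_nonpos]; positivity)
    _ = M * μ₀ ^ (1 / p) * h ^ (-(d : ℝ) / p) := by
        rw [Real.div_rpow (by positivity) hμ₀.le, Real.rpow_neg hμ₀.le, div_inv_eq_mul,
          ← Real.rpow_natCast, ← Real.rpow_mul hh.le]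
        rw [show (d : ℝ) * -(1 / p) = -(d : ℝ) / p by ring]
        ring
end

section
/- Let d ≥ 2, p ∈ [1,∞), s ∈ (1/p, 1), and μ₀ > 0. Then there exists a constant C > 0, depending only on d, p, s and μ₀, such that for every d-dimensional simplex T ⊆ ℝ^d with shape measure μ(T) ≤ μ₀, every facet F of T, and every continuous function v : T → ℝ with ∫_T v dx = 0 and finite Gagliardo seminorm |v|_{W^{s,p}(T)}, one has ( ∫_F |v|^p dH^{d−1} )^{1/p} ≤ C · h_T^{s − 1/p} · |v|_{W^{s,p}(T)}, where H^{d−1} is the (d−1)-dimensional Hausdorff measure and h_T the diameter of T. -/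
/-!
The proof is a chaining argument centred at the points `z` of the facet `F`. By convexity of the
simplex `T`, the homothetic copies `T_n(z) = z + 2 ^ (-n) (T - z)` lie in `T`. The mean `g_n(z)` of `v`
over `T_n(z)` is `0` for `n = 0` and tends to `v(z)`, by continuity. Jensen's inequality bounds
`|g_{n+1}(z) - g_n(z)| ^ p` by the mean of `|v(x) - v(y)| ^ p` over `T_n(z) × T_{n+1}(z)`, where
`‖x - y‖ ≤ 2 · 2 ^ (-n) h`; this inserts the Gagliardo kernel (`local_bound`). Integrating over `z ∈ F`
and exchanging integrals produces the factor `H^{d-1}(F ∩ B(x, 2 ^ (-n) h))`, at most a constant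
times `(2 ^ (-n) h) ^ (d - 1)` since `F` lies in a hyperplane (`hausdorff_ball_bound`, `step_bound`).
With `vol T ≥ h ^ d / μ₀` this gives
`‖g_{n+1} - g_n‖_{L^p(F)} ≤ C (2 ^ (-n) h) ^ (s - 1 / p) |v|_{W^{s,p}(T)}`,
and as `s > 1 / p` the sum over `n` is a convergent geometric series (`trace_bound`).
The estimate is carried out directly on `T`, without a reference simplex, so the constant visibly
depends only on `d`, `p`, `s`, `μ₀`.
-/

open MeasureTheory

section

open scoped ENNReal

/-! ### Hausdorff measure, Jensen's inequality and homotheties -/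

/-- A subset of a translate of a `k`-dimensional subspace has `k`-dimensional Hausdorff measure at most
`A r ^ k` in every ball of radius `r`, with `A` depending on `k` only: inside the translate, the part
in the ball lies in the isometric image of a `k`-dimensional Euclidean ball of radius `2 r`. -/
theorem hausdorff_ball_bound (k : ℕ) : ∃ A : ℝ, 0 < A ∧
    ∀ {E : Type} [NormedAddCommGroup E] [InnerProductSpace ℝ E] [FiniteDimensional ℝ E]
      [MeasurableSpace E] [BorelSpace E] (S : Submodule ℝ E), Module.finrank ℝ S = k →
      ∀ F : Set E, (∀ a ∈ F, ∀ b ∈ F, b - a ∈ S) → ∀ (y : E) (r : ℝ), 0 < r →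
        μH[(k : ℝ)] (F ∩ Metric.closedBall y r) ≤ ENNReal.ofReal (A * r ^ k) := by
  have hH : (μH[(k : ℝ)] : Measure (EuclideanSpace ℝ (Fin k))).IsAddHaarMeasure := by
    simpa using isAddHaarMeasure_hausdorffMeasure (E := EuclideanSpace ℝ (Fin k))
  set m := (μH[(k : ℝ)] : Measure (EuclideanSpace ℝ (Fin k))) (Metric.ball 0 1) with hm
  have hmtop : m ≠ ∞ := measure_ball_lt_top.ne
  have hmpos : 0 < m := Metric.measure_ball_pos _ _ one_pos
  refine ⟨2 ^ k * m.toReal, by have := ENNReal.toReal_pos hmpos.ne' hmtop; positivity, ?_⟩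
  intro E _ _ _ _ _ S hS F hF y r hr
  rcases (F ∩ Metric.closedBall y r).eq_empty_or_nonempty with h0 | ⟨w, hwF, hwr⟩
  · simp [h0]
  let b := (stdOrthonormalBasis ℝ S).reindex (finCongr hS)
  let L : EuclideanSpace ℝ (Fin k) →ₗᵢ[ℝ] E :=
    S.subtypeₗᵢ.comp b.repr.symm.toLinearIsometry
  let φ : EuclideanSpace ℝ (Fin k) → E := fun u => w + L u
  have hφ : Isometry φ := (isometry_add_left w).comp L.isometry
  have hsub : F ∩ Metric.closedBall y r ⊆ φ '' Metric.closedBall 0 (2 * r) := by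
    rintro q ⟨hqF, hqr⟩
    refine ⟨b.repr ⟨q - w, hF w hwF q hqF⟩, ?_, ?_⟩
    · rw [mem_closedBall_zero_iff, LinearIsometryEquiv.norm_map]
      change ‖q - w‖ ≤ _
      rw [← dist_eq_norm]
      have := dist_triangle_right q w y
      rw [Metric.mem_closedBall] at hqr hwr
      linarith
    · simp [φ, L]
  calc μH[(k : ℝ)] (F ∩ Metric.closedBall y r)
      ≤ μH[(k : ℝ)] (φ '' Metric.closedBall 0 (2 * r)) := measure_mono hsub
    _ = μH[(k : ℝ)] (Metric.closedBall (0 : EuclideanSpace ℝ (Fin k)) (2 * r)) :=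
        hφ.hausdorffMeasure_image (Or.inl (by positivity)) _
    _ = ENNReal.ofReal ((2 * r) ^ k) * m := by
        rw [Measure.addHaar_closedBall _ _ (by positivity)]; simp [hm]
    _ = ENNReal.ofReal (2 ^ k * m.toReal * r ^ k) := by
        rw [← ENNReal.ofReal_toReal hmtop, ← ENNReal.ofReal_mul (by positivity),
          ENNReal.ofReal_toReal hmtop]
        congr 1; ring

/-- Jensen's inequality for `t ↦ |t| ^ p` and a probability measure. -/
theorem enorm_integral_rpow_le {α : Type*} [MeasurableSpace α] (ν : Measure α)
    [IsProbabilityMeasure ν] (f : α → ℝ) (hf : AEStronglyMeasurable f ν) {p : ℝ} (hp : 1 ≤ p) :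
    ‖∫ a, f a ∂ν‖ₑ ^ p ≤ ∫⁻ a, ‖f a‖ₑ ^ p ∂ν := by
  have hp0 : 0 < p := by linarith
  have h := eLpNorm_le_eLpNorm_of_exponent_le (p := 1) (q := ENNReal.ofReal p) (μ := ν)
    (by simpa using hp) hf
  rw [eLpNorm_one_eq_lintegral_enorm, eLpNorm_eq_lintegral_rpow_enorm_toReal (by simpa using hp0)
    ENNReal.ofReal_ne_top, ENNReal.toReal_ofReal hp0.le] at h
  have h2 := (enorm_integral_le_lintegral_enorm (μ := ν) f).trans h
  have h3 := ENNReal.rpow_le_rpow h2 hp0.le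
  rwa [← ENNReal.rpow_mul, one_div_mul_cancel hp0.ne', ENNReal.rpow_one] at h3

/-- The homothety with centre `z ∈ T` and ratio `c ≤ 1` maps a convex set `T` of radius at most `h`
about `z` into `T ∩ closedBall z (c h)`, and multiplies volumes by `c ^ d`. -/
theorem map_shrink_le {d : ℕ} (T : Set (EuclideanSpace ℝ (Fin d))) (hT : Convex ℝ T)
    {h : ℝ} {z : EuclideanSpace ℝ (Fin d)} (hz : z ∈ T) (hTh : ∀ y ∈ T, dist y z ≤ h) {c : ℝ} (hc : 0 < c) (hc1 : c ≤ 1) :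
    (volume.restrict T).map (fun y => z + c • (y - z)) ≤
      (ENNReal.ofReal (c ^ d))⁻¹ • (volume.restrict (T ∩ Metric.closedBall z (c * h))) := by
  have hmeas : Measurable (fun y : EuclideanSpace ℝ (Fin d) => z + c • (y - z)) := by fun_prop
  refine Measure.le_iff.2 fun A hA => ?_
  rw [Measure.map_apply hmeas hA, Measure.restrict_apply (hmeas hA), Measure.smul_apply,
    Measure.restrict_apply hA, smul_eq_mul, ← ENNReal.div_eq_inv_mul,
    ENNReal.le_div_iff_mul_le (Or.inl (by simp; positivity)) (Or.inl ENNReal.ofReal_ne_top)]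
  have hi := Measure.addHaar_image_homothety (volume : Measure (EuclideanSpace ℝ (Fin d))) z c
    ((fun y : EuclideanSpace ℝ (Fin d) => z + c • (y - z)) ⁻¹' A ∩ T)
  rw [finrank_euclideanSpace_fin, abs_of_pos (by positivity), mul_comm] at hi
  rw [← hi]
  apply measure_mono
  rintro _ ⟨y, ⟨hyA, hyT⟩, rfl⟩
  have e : AffineMap.homothety z c y = z + c • (y - z) := by
    simp [AffineMap.homothety_apply, add_comm]
  rw [e]
  refine ⟨hyA, ?_, ?_⟩
  · have := hT hz hyT (by linarith : 0 ≤ 1 - c) hc.le (by ring)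
    convert this using 1
    module
  · rw [Metric.mem_closedBall, dist_eq_norm, add_sub_cancel_left, norm_smul, Real.norm_of_nonneg hc.le,
      ← dist_eq_norm]
    exact mul_le_mul_of_nonneg_left (hTh y hyT) hc.le

/-! ### Differences of consecutive means -/

/-- The `ν`-average of `V` after shrinking towards `z` by the factor `c`. For `ν` the uniform measure
on `T` this is the mean of `V` over the homothetic copy `z + c (T - z)` of `T`. -/
noncomputable def shrinkAvg {d : ℕ} (ν : Measure (EuclideanSpace ℝ (Fin d)))
    (V : EuclideanSpace ℝ (Fin d) → ℝ) (c : ℝ) (z : EuclideanSpace ℝ (Fin d)) : ℝ :=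
  ∫ y, V (z + c • (y - z)) ∂ν

/-- The integrand of the Gagliardo seminorm (to the power `p`), with values in `ℝ≥0∞`. -/
noncomputable def gagliardoKernel {d : ℕ} (s p : ℝ) (V : EuclideanSpace ℝ (Fin d) → ℝ)
    (x y : EuclideanSpace ℝ (Fin d)) : ℝ≥0∞ :=
  ENNReal.ofReal (|V x - V y| ^ p / ‖x - y‖ ^ ((d : ℝ) + s * p))

theorem measurable_gagliardoKernel {d : ℕ} (s p : ℝ) {V : EuclideanSpace ℝ (Fin d) → ℝ}
    (hV : Continuous V) : Measurable (Function.uncurry (gagliardoKernel s p V)) := by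
  have := hV.measurable
  unfold gagliardoKernel Function.uncurry
  fun_prop

theorem enorm_sub_rpow_le {d : ℕ} {s p : ℝ} (hp : 1 ≤ p) (hs : 0 < s)
    (V : EuclideanSpace ℝ (Fin d) → ℝ) {x y : EuclideanSpace ℝ (Fin d)} {R : ℝ}
    (hxy : ‖x - y‖ ≤ R) :
    ‖V x - V y‖ₑ ^ p ≤ ENNReal.ofReal (R ^ ((d : ℝ) + s * p)) * gagliardoKernel s p V x y := by
  have hp0 : 0 < p := by linarith
  have hsp : 0 < s * p := by positivity
  have hR : 0 ≤ R := (norm_nonneg _).trans hxy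
  rcases eq_or_ne x y with rfl | hne
  · simp [hp0]
  have hn : 0 < ‖x - y‖ := norm_pos_iff.2 (sub_ne_zero.2 hne)
  rw [gagliardoKernel, ← ENNReal.ofReal_mul (by positivity), Real.enorm_eq_ofReal_abs,
    ENNReal.ofReal_rpow_of_nonneg (abs_nonneg _) hp0.le]
  apply ENNReal.ofReal_le_ofReal
  rw [mul_div_assoc', le_div_iff₀ (by positivity), mul_comm]
  gcongr

/-- Two consecutive means of `V`, over the copies of `T` shrunk towards `z` by `c` and `c / 2`, differ
by an amount controlled by the Gagliardo kernel near `z`: by Jensen, the `p`-th power of the difference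
is at most the mean of `|V x - V y| ^ p` over pairs from the two copies, which are at distance at
most `2 c h`. -/
theorem local_bound {d : ℕ} {s p : ℝ} (hp : 1 ≤ p) (hs : 0 < s)
    {T : Set (EuclideanSpace ℝ (Fin d))} (hT : Convex ℝ T) (hTm : MeasurableSet T)
    {h τ M : ℝ} (hτ : 0 < τ) (hvol : volume T = ENNReal.ofReal τ)
    {V : EuclideanSpace ℝ (Fin d) → ℝ} (hV : Continuous V) (hVM : ∀ x, ‖V x‖ ≤ M)
    {z : EuclideanSpace ℝ (Fin d)} (hz : z ∈ T) (hTh : ∀ y ∈ T, dist y z ≤ h)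
    {c : ℝ} (hc : 0 < c) (hc1 : c ≤ 1) :
    ‖shrinkAvg ((volume T)⁻¹ • volume.restrict T) V (c / 2) z -
        shrinkAvg ((volume T)⁻¹ • volume.restrict T) V c z‖ₑ ^ p ≤
      ENNReal.ofReal (τ⁻¹ * (c ^ d)⁻¹ * (τ⁻¹ * ((c / 2) ^ d)⁻¹ *
        (2 * c * h) ^ ((d : ℝ) + s * p))) *
      ∫⁻ x in T ∩ Metric.closedBall z (c * h), ∫⁻ y in T, gagliardoKernel s p V x y := by
  have hh : 0 ≤ h := by simpa using hTh z hz
  have hv0 : volume T ≠ 0 := by simp [hvol, hτ]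
  have hvt : volume T ≠ ∞ := by simp [hvol]
  set ν := (volume T)⁻¹ • volume.restrict T with hν
  have : IsProbabilityMeasure ν := ⟨by simp [hν, ENNReal.inv_mul_cancel hv0 hvt]⟩
  have hcont : ∀ a : ℝ, Continuous (fun y : EuclideanSpace ℝ (Fin d) => z + a • (y - z)) :=
    fun a => by fun_prop
  have hint : ∀ a : ℝ, Integrable (fun y => V (z + a • (y - z))) ν := fun a =>
    Integrable.of_bound (hV.comp (hcont a)).aestronglyMeasurable M (.of_forall fun y => hVM _)
  have hdiff : shrinkAvg ν V (c / 2) z - shrinkAvg ν V c z =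
      ∫ q, (V (z + (c / 2) • (q.2 - z)) - V (z + c • (q.1 - z))) ∂(ν.prod ν) := by
    rw [integral_sub ((hint _).comp_snd ν) ((hint _).comp_fst ν)]
    rw [integral_fun_snd (fun y => V (z + (c / 2) • (y - z))),
      integral_fun_fst (fun y => V (z + c • (y - z)))]
    simp [shrinkAvg]
  have hmap : ∀ a : ℝ, 0 < a → a ≤ 1 → ν.map (fun y => z + a • (y - z)) ≤
      ENNReal.ofReal (τ⁻¹ * (a ^ d)⁻¹) • volume.restrict (T ∩ Metric.closedBall z (a * h)) := by
    intro a ha ha1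
    rw [hν, Measure.map_smul, ENNReal.ofReal_mul (by positivity), ENNReal.ofReal_inv_of_pos hτ,
      ENNReal.ofReal_inv_of_pos (by positivity), ← hvol, mul_smul]
    exact Measure.le_iff.2 fun A hA => by
      simpa using mul_le_mul_right (Measure.le_iff.1 (map_shrink_le T hT hz hTh ha ha1) A hA) _
  have hVm := hV.measurable
  have hmF : Measurable fun q : EuclideanSpace ℝ (Fin d) × EuclideanSpace ℝ (Fin d) =>
      ‖V q.2 - V q.1‖ₑ ^ p := by fun_prop
  rw [hdiff]
  refine (enorm_integral_rpow_le _ _ ?_ hp).trans ?_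
  · exact (((hint _).comp_snd ν).sub ((hint _).comp_fst ν)).aestronglyMeasurable
  calc ∫⁻ q, ‖V (z + (c / 2) • (q.2 - z)) - V (z + c • (q.1 - z))‖ₑ ^ p ∂(ν.prod ν)
      = ∫⁻ y, ∫⁻ y', ‖V (z + (c / 2) • (y' - z)) - V (z + c • (y - z))‖ₑ ^ p ∂ν ∂ν :=
        lintegral_prod _ (by fun_prop)
    _ = ∫⁻ x, ∫⁻ x', ‖V x' - V x‖ₑ ^ p ∂(ν.map (fun y => z + (c / 2) • (y - z)))
          ∂(ν.map (fun y => z + c • (y - z))) := by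
        rw [lintegral_map (hmF.lintegral_prod_right') (hcont c).measurable]
        refine lintegral_congr fun y => ?_
        rw [lintegral_map (by fun_prop) (hcont _).measurable]
    _ ≤ ∫⁻ x, ∫⁻ x', ‖V x' - V x‖ₑ ^ p
          ∂(ENNReal.ofReal (τ⁻¹ * ((c / 2) ^ d)⁻¹) •
            volume.restrict (T ∩ Metric.closedBall z (c / 2 * h)))
          ∂(ENNReal.ofReal (τ⁻¹ * (c ^ d)⁻¹) •
            volume.restrict (T ∩ Metric.closedBall z (c * h))) :=
        lintegral_mono' (hmap c hc hc1) fun x =>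
          lintegral_mono' (hmap (c / 2) (by positivity) (by linarith)) le_rfl
    _ = ENNReal.ofReal (τ⁻¹ * (c ^ d)⁻¹) * ∫⁻ x in T ∩ Metric.closedBall z (c * h),
          ENNReal.ofReal (τ⁻¹ * ((c / 2) ^ d)⁻¹) *
          ∫⁻ x' in T ∩ Metric.closedBall z (c / 2 * h), ‖V x' - V x‖ₑ ^ p := by
        simp_rw [lintegral_smul_measure, smul_eq_mul]
    _ ≤ ENNReal.ofReal (τ⁻¹ * (c ^ d)⁻¹) * ∫⁻ x in T ∩ Metric.closedBall z (c * h),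
          ENNReal.ofReal (τ⁻¹ * ((c / 2) ^ d)⁻¹) *
          (ENNReal.ofReal ((2 * c * h) ^ ((d : ℝ) + s * p)) *
            ∫⁻ x' in T, gagliardoKernel s p V x x') := by
        gcongr ENNReal.ofReal _ * ?_
        refine setLIntegral_mono' (hTm.inter Metric.isClosed_closedBall.measurableSet)
          fun x hx => ?_
        gcongr ENNReal.ofReal _ * ?_
        rw [← lintegral_const_mul' _ _ ENNReal.ofReal_ne_top]
        refine le_trans (setLIntegral_mono'
          (hTm.inter Metric.isClosed_closedBall.measurableSet) fun x' hx' => ?_)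
          (lintegral_mono_set Set.inter_subset_left)
        rw [← enorm_neg, neg_sub]
        refine enorm_sub_rpow_le hp hs V ?_
        have h1 := hx.2
        have h2 := hx'.2
        rw [Metric.mem_closedBall] at h1 h2
        rw [← dist_eq_norm]
        have := dist_triangle_right x x' z
        nlinarith [mul_nonneg hc.le hh]
    _ = _ := by
        rw [lintegral_const_mul' _ _ ENNReal.ofReal_ne_top,
          lintegral_const_mul' _ _ ENNReal.ofReal_ne_top, ← mul_assoc, ← mul_assoc,
          ← ENNReal.ofReal_mul (by positivity), ← ENNReal.ofReal_mul (by positivity), mul_assoc]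

/-- `local_bound` integrated over a measure `κ` with the growth of a `(d - 1)`-dimensional one. After
exchanging the integrals, `κ` only enters through the mass `κ (closedBall x (c h))`. -/
theorem step_bound {d : ℕ} {s p : ℝ} (hp : 1 ≤ p) (hs : 0 < s)
    {T : Set (EuclideanSpace ℝ (Fin d))} (hT : Convex ℝ T) (hTm : MeasurableSet T)
    {h τ M A : ℝ} (hh : 0 < h) (hτ : 0 < τ) (hvol : volume T = ENNReal.ofReal τ)
    (hTh : ∀ y ∈ T, ∀ z ∈ T, dist y z ≤ h)
    {V : EuclideanSpace ℝ (Fin d) → ℝ} (hV : Continuous V) (hVM : ∀ x, ‖V x‖ ≤ M)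
    (κ : Measure (EuclideanSpace ℝ (Fin d))) [SFinite κ] (hκT : ∀ᵐ z ∂κ, z ∈ T)
    (hκ : ∀ x r, 0 < r → κ (Metric.closedBall x r) ≤ ENNReal.ofReal (A * r ^ (d - 1)))
    {c : ℝ} (hc : 0 < c) (hc1 : c ≤ 1) :
    ∫⁻ z, ‖shrinkAvg ((volume T)⁻¹ • volume.restrict T) V (c / 2) z -
        shrinkAvg ((volume T)⁻¹ • volume.restrict T) V c z‖ₑ ^ p ∂κ ≤
      ENNReal.ofReal (τ⁻¹ * (c ^ d)⁻¹ * (τ⁻¹ * ((c / 2) ^ d)⁻¹ *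
        (2 * c * h) ^ ((d : ℝ) + s * p)) * (A * (c * h) ^ (d - 1))) *
      ∫⁻ x in T, ∫⁻ y in T, gagliardoKernel s p V x y := by
  set J : EuclideanSpace ℝ (Fin d) → ℝ≥0∞ := fun x => ∫⁻ y in T, gagliardoKernel s p V x y with hJ
  have hJm : Measurable J := (measurable_gagliardoKernel s p hV).lintegral_prod_right'
  set B := τ⁻¹ * (c ^ d)⁻¹ * (τ⁻¹ * ((c / 2) ^ d)⁻¹ * (2 * c * h) ^ ((d : ℝ) + s * p)) with hB
  have hB0 : 0 ≤ B := by positivity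
  let D : Set (EuclideanSpace ℝ (Fin d) × EuclideanSpace ℝ (Fin d)) := {q | dist q.2 q.1 ≤ c * h}
  have hD : MeasurableSet D := (isClosed_le (by fun_prop) continuous_const).measurableSet
  calc _ ≤ ∫⁻ z, (ENNReal.ofReal B * ∫⁻ x in T ∩ Metric.closedBall z (c * h), J x) ∂κ := by
        refine lintegral_mono_ae ?_
        filter_upwards [hκT] with z hz
        exact local_bound hp hs hT hTm hτ hvol hV hVM hz (fun y hy => hTh y hy z hz) hc hc1
    _ = ENNReal.ofReal B * ∫⁻ z, (∫⁻ x in T, D.indicator (fun q => J q.2) (z, x)) ∂κ := by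
        rw [lintegral_const_mul' _ _ ENNReal.ofReal_ne_top]
        congr 1
        refine lintegral_congr fun z => ?_
        rw [Set.inter_comm, ← Measure.restrict_restrict Metric.isClosed_closedBall.measurableSet,
          ← lintegral_indicator Metric.isClosed_closedBall.measurableSet]
        rfl
    _ = ENNReal.ofReal B * ∫⁻ x in T, ∫⁻ z, D.indicator (fun q => J q.2) (z, x) ∂κ := by
        rw [lintegral_lintegral_swap]
        exact ((hJm.comp measurable_snd).indicator hD).aemeasurable
    _ ≤ ENNReal.ofReal B * ∫⁻ x in T, ENNReal.ofReal (A * (c * h) ^ (d - 1)) * J x := by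
        gcongr with x
        calc ∫⁻ z, D.indicator (fun q => J q.2) (z, x) ∂κ
            = ∫⁻ z, (Metric.closedBall x (c * h)).indicator (fun _ => J x) z ∂κ := by
              refine lintegral_congr fun z => ?_
              simp only [Set.indicator, D, Set.mem_ofPred_eq, Metric.mem_closedBall, dist_comm]
          _ = J x * κ (Metric.closedBall x (c * h)) :=
              lintegral_indicator_const Metric.isClosed_closedBall.measurableSet _
          _ ≤ _ := by
              rw [mul_comm]
              gcongr
              exact hκ x _ (by positivity)
    _ = _ := by
        rw [lintegral_const_mul' _ _ ENNReal.ofReal_ne_top, ← mul_assoc,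
          ← ENNReal.ofReal_mul hB0]

/-! ### Summation over the scales -/

/-- The factor in `step_bound`, with `τ` the volume of `T`: the shape bound replaces `τ⁻¹` by
`μ₀ / h ^ d`, after which all powers collapse to `(c h) ^ (s p - 1)`. -/
theorem const_bound {d : ℕ} (hd : 1 ≤ d) {s p h τ A μ₀ c : ℝ} (hh : 0 < h) (hA : 0 ≤ A)
    (hτ : 0 < τ) (hμ : h ^ d / τ ≤ μ₀) (hc : 0 < c) :
    τ⁻¹ * (c ^ d)⁻¹ * (τ⁻¹ * ((c / 2) ^ d)⁻¹ * (2 * c * h) ^ ((d : ℝ) + s * p)) *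
        (A * (c * h) ^ (d - 1)) ≤
      μ₀ ^ 2 * 2 ^ d * 2 ^ ((d : ℝ) + s * p) * A * h ^ (s * p - 1) * c ^ (s * p - 1) := by
  obtain ⟨k, rfl⟩ : ∃ k, d = k + 1 := ⟨d - 1, by omega⟩
  have hτ' : τ⁻¹ ≤ μ₀ / h ^ (k + 1) := by
    rw [le_div_iff₀ (by positivity)]
    calc τ⁻¹ * h ^ (k + 1) = h ^ (k + 1) / τ := by ring
      _ ≤ μ₀ := hμ
  have hμ0 : 0 ≤ μ₀ := le_trans (by positivity) hμ
  have e : ∀ t : ℝ, 0 < t → t ^ (((k + 1 : ℕ) : ℝ) + s * p) = t ^ (k + 1) * (t ^ (s * p - 1) * t) := by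
    intro t ht
    rw [Real.rpow_add ht, Real.rpow_natCast, Real.rpow_sub_one ht.ne', div_mul_cancel₀ _ ht.ne']
  calc _ ≤ (μ₀ / h ^ (k + 1)) * (c ^ (k + 1))⁻¹ * ((μ₀ / h ^ (k + 1)) * ((c / 2) ^ (k + 1))⁻¹ *
        (2 * c * h) ^ (((k + 1 : ℕ) : ℝ) + s * p)) * (A * (c * h) ^ (k + 1 - 1)) := by
        gcongr
    _ = _ := by
        rw [mul_assoc 2 c h, Real.mul_rpow (by norm_num) (by positivity),
          Real.mul_rpow hc.le hh.le, e c hc, e h hh, Nat.add_sub_cancel, div_pow, mul_pow]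
        field_simp
        ring

/-- The trace–Poincaré inequality for a bounded convex set `T` and any measure `κ` on `T` with
`(d - 1)`-dimensional growth: telescope the means over the copies of `T` shrunk by `2 ^ (-n)`, starting
from the mean over `T`, which is zero, and converging to `V`. -/
theorem trace_bound {d : ℕ} (hd : 1 ≤ d) {s p : ℝ} (hp : 1 ≤ p) (hs : 1 / p < s)
    {T : Set (EuclideanSpace ℝ (Fin d))} (hT : Convex ℝ T) (hTm : MeasurableSet T)
    {h τ M A μ₀ : ℝ} (hh : 0 < h) (hA : 0 ≤ A) (hτ : 0 < τ) (hvol : volume T = ENNReal.ofReal τ)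
    (hμ : h ^ d / τ ≤ μ₀)
    (hTh : ∀ y ∈ T, ∀ z ∈ T, dist y z ≤ h)
    {V : EuclideanSpace ℝ (Fin d) → ℝ} (hV : Continuous V) (hVM : ∀ x, ‖V x‖ ≤ M)
    (hmean : ∫ y in T, V y = 0)
    (κ : Measure (EuclideanSpace ℝ (Fin d))) [SFinite κ] (hκT : ∀ᵐ z ∂κ, z ∈ T)
    (hκ : ∀ x r, 0 < r → κ (Metric.closedBall x r) ≤ ENNReal.ofReal (A * r ^ (d - 1))) :
    eLpNorm V (ENNReal.ofReal p) κ ≤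
      ENNReal.ofReal ((μ₀ ^ 2 * 2 ^ d * 2 ^ ((d : ℝ) + s * p) * A) ^ (1 / p) *
        (1 - (1 / 2) ^ (s - 1 / p))⁻¹ * h ^ (s - 1 / p)) *
      (∫⁻ x in T, ∫⁻ y in T, gagliardoKernel s p V x y) ^ (1 / p) := by
  have hp0 : 0 < p := by linarith
  have hs0 : 0 < s := lt_trans (by positivity) hs
  have hv0 : volume T ≠ 0 := by simp [hvol, hτ]
  have hvt : volume T ≠ ∞ := by simp [hvol]
  set I := ∫⁻ x in T, ∫⁻ y in T, gagliardoKernel s p V x y with hI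
  set ν := (volume T)⁻¹ • volume.restrict T with hν
  have : IsProbabilityMeasure ν := ⟨by simp [hν, ENNReal.inv_mul_cancel hv0 hvt]⟩
  set K := μ₀ ^ 2 * 2 ^ d * 2 ^ ((d : ℝ) + s * p) * A with hK
  have hK0 : 0 ≤ K := by positivity
  set θ : ℝ := (1 / 2) ^ (s - 1 / p) with hθ
  have hθ0 : 0 < θ := by positivity
  have hθ1 : θ < 1 := Real.rpow_lt_one (by norm_num) (by norm_num) (by linarith)
  let g : ℕ → EuclideanSpace ℝ (Fin d) → ℝ := fun n => shrinkAvg ν V ((1 / 2) ^ n)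
  have hgm : ∀ n, StronglyMeasurable (g n) := fun n => by
    refine StronglyMeasurable.integral_prod_right
      (f := fun z y : EuclideanSpace ℝ (Fin d) => V (z + ((1 / 2 : ℝ) ^ n) • (y - z))) ?_
    refine Continuous.stronglyMeasurable (hV.comp ?_)
    fun_prop
  have hg0 : g 0 = 0 := by
    funext z
    simp [g, shrinkAvg, hν, integral_smul_measure, hmean]
  have hstep : ∀ n, eLpNorm (g (n + 1) - g n) (ENNReal.ofReal p) κ ≤
      ENNReal.ofReal (K ^ (1 / p) * h ^ (s - 1 / p) * θ ^ n) * I ^ (1 / p) := by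
    intro n
    have hc : (0 : ℝ) < (1 / 2) ^ n := by positivity
    have hc1 : ((1 : ℝ) / 2) ^ n ≤ 1 := pow_le_one₀ (by norm_num) (by norm_num)
    rw [eLpNorm_eq_lintegral_rpow_enorm_toReal (by simpa using hp0) ENNReal.ofReal_ne_top,
      ENNReal.toReal_ofReal hp0.le]
    have h1 := (step_bound hp hs0 hT hTm hh hτ hvol hTh hV hVM κ hκT hκ hc hc1).trans
      (mul_le_mul_left (ENNReal.ofReal_le_ofReal (const_bound hd hh hA hτ hμ hc)) _)
    have h2 := ENNReal.rpow_le_rpow h1 (by positivity : 0 ≤ 1 / p)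
    rw [ENNReal.mul_rpow_of_nonneg _ _ (by positivity),
      ENNReal.ofReal_rpow_of_nonneg (by positivity) (by positivity)] at h2
    have e : (K * h ^ (s * p - 1) * ((1 / 2) ^ n) ^ (s * p - 1)) ^ (1 / p) =
        K ^ (1 / p) * h ^ (s - 1 / p) * θ ^ n := by
      have e1 : (s * p - 1) * (1 / p) = s - 1 / p := by field_simp
      rw [Real.mul_rpow (by positivity) (by positivity), Real.mul_rpow (by positivity) (by positivity),
        ← Real.rpow_mul hh.le, ← Real.rpow_mul hc.le, e1, hθ, ← Real.rpow_natCast,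
        ← Real.rpow_natCast, ← Real.rpow_mul (by norm_num), ← Real.rpow_mul (by norm_num),
        mul_comm (n : ℝ)]
    rw [e] at h2
    have e3 : ((1 : ℝ) / 2) ^ (n + 1) = (1 / 2) ^ n / 2 := by ring
    simpa only [g, Pi.sub_apply, e3] using h2
  -- Minkowski's inequality and the geometric series with ratio `θ = 2 ^ (1 / p - s) < 1`
  have hsum : ∀ N, eLpNorm (g N) (ENNReal.ofReal p) κ ≤
      ENNReal.ofReal (K ^ (1 / p) * (1 - θ)⁻¹ * h ^ (s - 1 / p)) * I ^ (1 / p) := by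
    intro N
    have ht : g N = ∑ n ∈ Finset.range N, (g (n + 1) - g n) := by
      rw [Finset.sum_range_sub, hg0, sub_zero]
    rw [ht]
    refine (eLpNorm_sum_le (fun n _ => ((hgm _).sub (hgm _)).aestronglyMeasurable)
      (by simpa using hp)).trans ((Finset.sum_le_sum fun n _ => hstep n).trans ?_)
    rw [← Finset.sum_mul, ← ENNReal.ofReal_sum_of_nonneg (fun n _ => by positivity),
      ← Finset.mul_sum]
    gcongr ENNReal.ofReal ?_ * _
    have hgs : ∑ n ∈ Finset.range N, θ ^ n ≤ (1 - θ)⁻¹ := by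
      rw [← tsum_geometric_of_lt_one hθ0.le hθ1]
      exact (summable_geometric_of_lt_one hθ0.le hθ1).sum_le_tsum _ (fun n _ => by positivity)
    calc _ ≤ K ^ (1 / p) * h ^ (s - 1 / p) * (1 - θ)⁻¹ := by gcongr
      _ = _ := by ring
  have hlim : ∀ z, Filter.Tendsto (fun n => g n z) Filter.atTop (nhds (V z)) := by
    intro z
    have h0 : ∫ _, V z ∂ν = V z := by simp
    rw [← h0]
    refine tendsto_integral_of_dominated_convergence (fun _ => M) (fun n => ?_)
      (integrable_const M) (fun n => .of_forall fun y => hVM _) (.of_forall fun y => ?_)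
    · exact (hV.comp (by fun_prop)).aestronglyMeasurable
    · have ht : Filter.Tendsto (fun n : ℕ => z + ((1 / 2 : ℝ) ^ n) • (y - z)) Filter.atTop
          (nhds (z + (0 : ℝ) • (y - z))) :=
        tendsto_const_nhds.add ((tendsto_pow_atTop_nhds_zero_of_lt_one (by norm_num)
          (by norm_num)).smul_const _)
      rw [zero_smul, add_zero] at ht
      exact (hV.tendsto z).comp ht
  -- Fatou's lemma
  refine (Lp.eLpNorm_lim_le_liminf_eLpNorm (fun n => (hgm n).aestronglyMeasurable) V
    (.of_forall hlim)).trans ?_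
  exact Filter.liminf_le_of_le (by isBoundedDefault)
    (fun b hb => by obtain ⟨N, hN⟩ := hb.exists; exact hN.trans (hsum N))

end

/-- **Fractional trace–Poincaré inequality on a simplex.**
For `d ≥ 2`, `p ∈ [1,∞)`, `s ∈ (1/p, 1)` and `μ₀ > 0` there is `C > 0`, depending
only on `d, p, s, μ₀`, such that for every `d`-simplex `T = conv{x₀,…,x_d} ⊆ ℝ^d`
with shape measure `h_T^d / vol(T) ≤ μ₀`, every facet `F` of `T` (the convex hull
of all vertices but one), and every continuous function `v : T → ℝ` with zero mean
over `T` and finite Gagliardo seminorm, one has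
`( ∫_F |v|^p dH^{d−1} )^{1/p} ≤ C · h_T^{s − 1/p} · |v|_{W^{s,p}(T)}`,
with `H^{d-1}` the `(d−1)`-dimensional Hausdorff measure. -/
theorem simplex_trace_poincare_inequality
    (d : ℕ) (hd : 2 ≤ d)
    (p s μ₀ : ℝ) (hp : 1 ≤ p) (hs : 1 / p < s) (hs1 : s < 1) (hμ₀ : 0 < μ₀) :
    ∃ C > 0,
      ∀ x : Fin (d + 1) → EuclideanSpace ℝ (Fin d),
        AffineIndependent ℝ x →
        Metric.diam (convexHull ℝ (Set.range x)) ^ d /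
            (volume (convexHull ℝ (Set.range x))).toReal ≤ μ₀ →
        ∀ i : Fin (d + 1),
          ∀ v : EuclideanSpace ℝ (Fin d) → ℝ,
            ContinuousOn v (convexHull ℝ (Set.range x)) →
            (∫ y in convexHull ℝ (Set.range x), v y) = 0 →
            IntegrableOn
              (fun q : EuclideanSpace ℝ (Fin d) × EuclideanSpace ℝ (Fin d) =>
                |v q.1 - v q.2| ^ p / ‖q.1 - q.2‖ ^ ((d : ℝ) + s * p))
              ((convexHull ℝ (Set.range x)) ×ˢ (convexHull ℝ (Set.range x))) →
            (∫ z in convexHull ℝ (x '' ({i}ᶜ)), |v z| ^ p ∂(μH[((d : ℝ) - 1)])) ^ (1 / p) ≤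
              C * Metric.diam (convexHull ℝ (Set.range x)) ^ (s - 1 / p) *
                gagliardoSeminorm d s p (convexHull ℝ (Set.range x)) v := by
  have hp0 : 0 < p := by linarith
  obtain ⟨A, hA, hball⟩ := hausdorff_ball_bound (d - 1)
  have hθ1 : ((1 : ℝ) / 2) ^ (s - 1 / p) < 1 :=
    Real.rpow_lt_one (by norm_num) (by norm_num) (by linarith)
  have hC : 0 < (μ₀ ^ 2 * 2 ^ d * 2 ^ ((d : ℝ) + s * p) * A) ^ (1 / p) *
      (1 - ((1 : ℝ) / 2) ^ (s - 1 / p))⁻¹ :=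
    mul_pos (by positivity) (inv_pos.2 (by linarith))
  refine ⟨_, hC, ?_⟩
  intro x hx hμ i v hv hmean hint
  set T := convexHull ℝ (Set.range x) with hTdef
  set F := convexHull ℝ (x '' {i}ᶜ) with hFdef
  set h := Metric.diam T with hh_def
  have hTc : IsCompact T := Set.Finite.isCompact_convexHull ℝ (Set.finite_range x)
  have hTconv : Convex ℝ T := convex_convexHull ℝ _
  have hTm : MeasurableSet T := hTc.isClosed.measurableSet
  have hFc : IsCompact F := Set.Finite.isCompact_convexHull ℝ ((Set.toFinite _).image x)
  have hFm : MeasurableSet F := hFc.isClosed.measurableSet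
  have hFT : F ⊆ T := convexHull_mono (Set.image_subset_range _ _)
  have hvt : volume T ≠ ⊤ := hTc.measure_lt_top.ne
  have hint_ne : (interior T).Nonempty := by
    rw [hTdef, interior_convexHull_nonempty_iff_affineSpan_eq_top,
      hx.affineSpan_eq_top_iff_card_eq_finrank_add_one]
    simp
  have hv0 : 0 < volume T := Measure.measure_pos_of_nonempty_interior _ hint_ne
  set τ := (volume T).toReal with hτdef
  have hτ : 0 < τ := ENNReal.toReal_pos hv0.ne' hvt
  have hvol : volume T = ENNReal.ofReal τ := (ENNReal.ofReal_toReal hvt).symm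
  have hTh : ∀ y ∈ T, ∀ z ∈ T, dist y z ≤ h := fun y hy z hz =>
    Metric.dist_le_diam_of_mem hTc.isBounded hy hz
  have hh : 0 < h := by
    refine Metric.diam_pos ?_ hTc.isBounded
    have h01 : (⟨0, by omega⟩ : Fin (d + 1)) ≠ ⟨1, by omega⟩ := by simp
    exact ⟨x _, subset_convexHull ℝ _ ⟨_, rfl⟩, x _, subset_convexHull ℝ _ ⟨_, rfl⟩,
      hx.injective.ne h01⟩
  -- `v` is only controlled on `T`; all integrals are unchanged if it is replaced by a bounded
  -- continuous extension `V`, which removes measurability and integrability issues off `T`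
  obtain ⟨M, hM⟩ := hTc.exists_bound_of_continuousOn hv
  obtain ⟨V, hVM, hVv⟩ := ContinuousMap.exists_restrict_eq_forall_mem_of_closed
    (⟨T.domRestrict v, hv.domRestrict⟩ : C(T, ℝ)) (t := Set.Icc (-M) M)
    (fun y => abs_le.1 (hM y y.2))
    (by
      obtain ⟨y, hy⟩ := hint_ne
      exact ⟨v y, abs_le.1 (hM y (interior_subset hy))⟩) hTc.isClosed
  have hVeq : ∀ y ∈ T, V y = v y := fun y hy => congrArg (fun f : C(T, ℝ) => f ⟨y, hy⟩) hVv
  have hmeanV : ∫ y in T, V y = 0 := by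
    rw [← hmean]; exact setIntegral_congr_fun hTm hVeq
  set S := vectorSpan ℝ (x '' {i}ᶜ) with hSdef
  have hS : Module.finrank ℝ S = d - 1 := by
    have h1 := hx.finrank_vectorSpan_image_finset (s := ({i}ᶜ : Finset (Fin (d + 1))))
      (n := d - 1) (by rw [Finset.card_compl]; simp; omega)
    rwa [Finset.coe_image, Finset.coe_compl, Finset.coe_singleton] at h1
  have hFS : ∀ a ∈ F, ∀ b ∈ F, b - a ∈ S := by
    intro a ha b hb
    rw [hSdef, ← direction_affineSpan]
    exact AffineSubspace.vsub_mem_direction (convexHull_subset_affineSpan _ hb)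
      (convexHull_subset_affineSpan _ ha)
  have hcast : ((d - 1 : ℕ) : ℝ) = (d : ℝ) - 1 := by
    rw [Nat.cast_sub (by omega)]; simp
  set κ : Measure (EuclideanSpace ℝ (Fin d)) := (μH[((d : ℝ) - 1)]).restrict F with hκdef
  have hκ : ∀ y r, 0 < r → κ (Metric.closedBall y r) ≤ ENNReal.ofReal (A * r ^ (d - 1)) := by
    intro y r hr
    rw [hκdef, Measure.restrict_apply Metric.isClosed_closedBall.measurableSet, Set.inter_comm,
      ← hcast]
    exact hball S hS F hFS y r hr
  have hκT : ∀ᵐ z ∂κ, z ∈ F := ae_restrict_mem hFm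
  have hκfin : IsFiniteMeasure κ := by
    obtain ⟨y, hy⟩ := hint_ne
    refine ⟨?_⟩
    have h1 : κ Set.univ ≤ κ (Metric.closedBall y h) := by
      refine measure_mono_ae ?_
      filter_upwards [hκT] with z hz _
      exact hTh z (hFT hz) y (interior_subset hy)
    exact h1.trans_lt ((hκ y h hh).trans_lt ENNReal.ofReal_lt_top)
  have key := trace_bound (by omega) hp hs hTconv hTm hh hA.le hτ hvol hμ hTh V.continuous
    (fun y => abs_le.2 (hVM y)) hmeanV κ (hκT.mono fun z hz => hFT hz) hκ
  have hnn : ∀ q : EuclideanSpace ℝ (Fin d) × EuclideanSpace ℝ (Fin d),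
      0 ≤ |v q.1 - v q.2| ^ p / ‖q.1 - q.2‖ ^ ((d : ℝ) + s * p) := fun q => by positivity
  have hG : ∫⁻ a in T, ∫⁻ b in T, gagliardoKernel s p V a b =
      ENNReal.ofReal (∫ a in T, ∫ b in T, |v a - v b| ^ p / ‖a - b‖ ^ ((d : ℝ) + s * p)) := by
    have e1 := setIntegral_prod (μ := volume) (ν := volume) _ hint
    rw [Measure.volume_eq_prod] at hint
    rw [← e1, ofReal_integral_eq_lintegral_ofReal hint (.of_forall hnn)]
    have e2 := lintegral_prod (μ := volume.restrict T) (ν := volume.restrict T) _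
      (measurable_gagliardoKernel s p V.continuous).aemeasurable
    simp only [Function.uncurry] at e2
    rw [← e2, Measure.prod_restrict]
    refine setLIntegral_congr_fun (hTm.prod hTm) fun q hq => ?_
    simp only [gagliardoKernel, hVeq _ hq.1, hVeq _ hq.2]
  have hG0 : 0 ≤ ∫ a in T, ∫ b in T, |v a - v b| ^ p / ‖a - b‖ ^ ((d : ℝ) + s * p) :=
    integral_nonneg fun a => integral_nonneg fun b => hnn (a, b)
  rw [hG, ENNReal.ofReal_rpow_of_nonneg hG0 (by positivity),
    ← ENNReal.ofReal_mul (by positivity)] at key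
  have hL : (∫ z in F, |v z| ^ p ∂(μH[((d : ℝ) - 1)])) ^ (1 / p) =
      (eLpNorm V (ENNReal.ofReal p) κ).toReal := by
    have e1 : ∫ z in F, |v z| ^ p ∂(μH[((d : ℝ) - 1)]) = ∫ z, |V z| ^ p ∂κ :=
      setIntegral_congr_fun hFm fun z hz => by simp only [hVeq z (hFT hz)]
    rw [e1, integral_eq_lintegral_of_nonneg_ae (.of_forall fun z => by positivity)
      ((Measurable.pow_const (by fun_prop) p).aestronglyMeasurable),
      eLpNorm_eq_lintegral_rpow_enorm_toReal (by simpa using hp0) ENNReal.ofReal_ne_top,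
      ENNReal.toReal_ofReal hp0.le, ENNReal.toReal_rpow]
    congr 2
    refine lintegral_congr fun z => ?_
    rw [Real.enorm_eq_ofReal_abs, ENNReal.ofReal_rpow_of_nonneg (abs_nonneg _) hp0.le]
  rw [hL, gagliardoSeminorm]
  exact ENNReal.toReal_le_of_le_ofReal (by positivity) key
end
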